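/- arXiv:1409.3702 — 6 statements merged into one kernel-verified Lean document; each statement's English description precedes it below -/
import Mathlib

section
/- Let G be a countable directed graph, F : E → ℝ a function and β ∈ ℝ. Let ψ ∈ [0,∞)^V be a vector such that Σ_{w∈V} A(β)_{vw} ψ_w ≤ ψ_v for all v ∈ V. Then there exist unique vectors h, k ∈ [0,∞)^V such that h is A(β)-harmonic and ψ_v = h_v + Σ_{w∈V} Σ_{n≥0} A(β)ⁿ_{vw} k_w for all v ∈ V; moreover k is given by k_v = ψ_v − Σ_{w∈V} A(β)_{vw} ψ_w for all v ∈ V. -/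
open scoped ENNReal NNReal Classical
open Filter MeasureTheory

/-- A countable directed graph: countable sets of vertices and edges with
source and range maps. -/
structure DirGraph where
  V : Type
  E : Type
  countV : Countable V
  countE : Countable E
  s : E → V
  r : E → V

namespace DirGraph

attribute [instance] countV countE

variable (G : DirGraph)

/-- `μ` is a finite path (a vertex counts as the empty path). -/
def IsPath (μ : List G.E) : Prop := μ.Chain' (fun e f => G.r e = G.s f)

/-- `μ` is a finite path from `u` to `w`. -/
def IsPathFrom (μ : List G.E) (u w : G.V) : Prop :=
  G.IsPath μ ∧ (∀ e ∈ μ.head?, G.s e = u) ∧ (∀ e ∈ μ.getLast?, G.r e = w) ∧ (μ = [] → u = w)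

/-- A function `F : E → ℝ` extended to finite paths. -/
def Fsum (F : G.E → ℝ) (μ : List G.E) : ℝ := (μ.map F).sum

/-- The matrix `A(β)` over the vertices, with entries in `[0,∞]`:
`A(β)_{uw} = Σ_{e : u → w} e^{-β F(e)}`. -/
noncomputable def Amat (F : G.E → ℝ) (β : ℝ) (u w : G.V) : ℝ≥0∞ :=
  ∑' e : {e : G.E // G.s e = u ∧ G.r e = w}, ENNReal.ofReal (Real.exp (-β * F e.1))

/-- The powers of the matrix `A(β)`, defined recursively; `A(β)⁰` is the identity matrix. -/
noncomputable def Apow (F : G.E → ℝ) (β : ℝ) : ℕ → G.V → G.V → ℝ≥0∞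
  | 0, u, w => if u = w then 1 else 0
  | n + 1, u, w => ∑' x : G.V, G.Amat F β u x * Apow F β n x w

/-- A sink is a vertex emitting no edges. -/
def IsSink (v : G.V) : Prop := ∀ e : G.E, G.s e ≠ v

/-- An infinite emitter is a vertex emitting infinitely many edges. -/
def InfEmitter (v : G.V) : Prop := {e : G.E | G.s e = v}.Infinite

/-- A set of vertices is hereditary when it is closed under following edges. -/
def Hereditary (H : Set G.V) : Prop := ∀ e : G.E, G.s e ∈ H → G.r e ∈ H

/-- A set of vertices `H` is saturated when every vertex of `V ∖ V∞` all of whose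
successors lie in `H` belongs to `H`. -/
def Saturated (H : Set G.V) : Prop :=
  ∀ v : G.V, ¬ G.IsSink v → ¬ G.InfEmitter v → (∀ e : G.E, G.s e = v → G.r e ∈ H) → v ∈ H

/-- `G` is cofinal when the only nonempty hereditary and saturated set of
vertices is the whole vertex set. -/
def Cofinal : Prop :=
  ∀ H : Set G.V, H.Nonempty → G.Hereditary H → G.Saturated H → H = Set.univ

/-- The set of non-wandering vertices: those lying on a loop of length ≥ 1. -/
def NW : Set G.V := {v | ∃ μ : List G.E, μ ≠ [] ∧ G.IsPathFrom μ v v}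

/-- `G` is strongly connected when there is a finite path between any two vertices. -/
def StronglyConnected : Prop := ∀ u w : G.V, ∃ μ : List G.E, G.IsPathFrom μ u w

/-- `G` is row-finite when every vertex emits only finitely many edges. -/
def RowFinite : Prop := ∀ v : G.V, {e : G.E | G.s e = v}.Finite

/-- `ψ` is an `A(β)`-harmonic vector. -/
def Harmonic (F : G.E → ℝ) (β : ℝ) (ψ : G.V → ℝ≥0) : Prop :=
  ∀ v : G.V, ∑' w : G.V, G.Amat F β v w * ψ w = (ψ v : ℝ≥0∞)

/-- `A(β)` is transient when `Σ_n A(β)ⁿ_{vv} < ∞` for every vertex. -/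
def Transient (F : G.E → ℝ) (β : ℝ) : Prop :=
  ∀ v : G.V, ∑' n : ℕ, G.Apow F β n v v ≠ ⊤

/-- `A(β)` is recurrent when `Σ_n A(β)ⁿ_{vv} = ∞` for some vertex. -/
def Recurrent (F : G.E → ℝ) (β : ℝ) : Prop :=
  ∃ v : G.V, ∑' n : ℕ, G.Apow F β n v v = ⊤

/-- An exit path: a sequence of vertices joined by edges which leaves every
finite set of vertices. -/
def IsExitPath (t : ℕ → G.V) : Prop :=
  (∀ i : ℕ, ∃ e : G.E, G.s e = t i ∧ G.r e = t (i + 1)) ∧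
  ∀ M : Set G.V, M.Finite → ∃ N : ℕ, ∀ i : ℕ, N ≤ i → t i ∉ M

/-- Tail equivalence of vertex sequences. -/
def TailEquiv (t t' : ℕ → G.V) : Prop :=
  ∃ k : ℤ, ∃ N : ℕ, ∀ i : ℕ, N ≤ i → 0 ≤ (i : ℤ) + k ∧ t ((i : ℤ) + k).toNat = t' i

/-- A simple loop based at `v`: a loop which returns to `v` only at the very end. -/
def IsSimpleLoop (v : G.V) (μ : List G.E) : Prop :=
  μ ≠ [] ∧ G.IsPathFrom μ v v ∧
  ∀ (i : ℕ) (h : i + 1 < μ.length), G.r (μ.get ⟨i, Nat.lt_of_succ_lt h⟩) ≠ v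

/-- `lⁿ_{vv}(β)`: the weighted number of simple loops of length `n` based at `v`. -/
noncomputable def loopSum (F : G.E → ℝ) (β : ℝ) (v : G.V) (n : ℕ) : ℝ≥0∞ :=
  ∑' μ : {μ : List G.E // μ.length = n ∧ G.IsSimpleLoop v μ},
    ENNReal.ofReal (Real.exp (-β * G.Fsum F μ.1))

/-- The space `P(G)` of infinite paths in `G`. -/
def PathSpace : Type := {p : ℕ → G.E // ∀ i : ℕ, G.r (p i) = G.s (p (i + 1))}

/-- The Borel σ-algebra of `P(G)` as a subspace of the product `E^ℕ` with `E`
discrete (for a countable discrete space, the Borel σ-algebra is the power set). -/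
instance : MeasurableSpace G.PathSpace :=
  letI : MeasurableSpace G.E := ⊤
  inferInstanceAs (MeasurableSpace {p : ℕ → G.E // ∀ i : ℕ, G.r (p i) = G.s (p (i + 1))})

/-- The cylinder set `Z'(v)` of infinite paths starting at the vertex `v`. -/
def cylV (v : G.V) : Set G.PathSpace := {p | G.s (p.1 0) = v}

/-- The cylinder set `Z'(μ)` of infinite paths beginning with the finite path `μ`. -/
def cylP (μ : List G.E) : Set G.PathSpace :=
  {p | ∀ (i : ℕ) (h : i < μ.length), p.1 i = μ.get ⟨i, h⟩}

/-- The set `P(G)_wan` of wandering infinite paths: those visiting each vertex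
only finitely many times. -/
def wanSet : Set G.PathSpace := {p | ∀ v : G.V, {i : ℕ | G.s (p.1 i) = v}.Finite}

end DirGraph

/-! Write `T` for the action of `A` on vectors and `N k = ∑ Tⁿ k` for the potential of `k`, so that
`N k = k + T (N k)`. Adding `T h` gives `k + T (h + N k) = T h + N k`. Hence, as soon as
`ψ = h + N k` is finite, `h` is harmonic if and only if `ψ = k + T ψ`: this pins down `k`, and
then `h` by subtraction. Conversely, for `k = ψ - T ψ` the partial sums `s` of `N k` satisfy
`s (n + 1) = k + T (s n)`, so by induction they stay below `ψ = k + T ψ`; thus `N k ≤ ψ` and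
`h = ψ - N k` is the harmonic part. -/

section Potential

variable {V : Type*} (A : V → V → ℝ≥0∞)

/-- The action `u ↦ A u` of a matrix with entries in `[0,∞]` on column vectors, as a linear map;
in contrast with `Matrix.mulVecLin` the index type may be infinite. -/
noncomputable def tsumMulVecLin : (V → ℝ≥0∞) →ₗ[ℝ≥0∞] (V → ℝ≥0∞) where
  toFun u v := ∑' w, A v w * u w
  map_add' u u' := by
    funext v
    simp only [Pi.add_apply, mul_add, ENNReal.tsum_add]
  map_smul' c u := by
    funext v
    simp only [Pi.smul_apply, smul_eq_mul, RingHom.id_apply, mul_left_comm, ENNReal.tsum_mul_left]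

/-- The potential `∑ Aⁿ k` of a vector `k`, with values in `[0,∞]`. -/
noncomputable def potential (k : V → ℝ≥0∞) (v : V) : ℝ≥0∞ :=
  ∑' n : ℕ, (tsumMulVecLin A ^ n) k v

/-- `ψ` is the sum of the `A`-harmonic vector `h` and the potential of the vector `k`. -/
def IsRieszDecomposition (ψ h k : V → ℝ≥0∞) : Prop :=
  tsumMulVecLin A h = h ∧ ψ = h + potential A k

variable {A} {ψ h k : V → ℝ≥0∞}

theorem tsumMulVecLin_apply (u : V → ℝ≥0∞) (v : V) :
    tsumMulVecLin A u v = ∑' w, A v w * u w := rfl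

theorem tsumMulVecLin_mono : Monotone (tsumMulVecLin A) := fun _ _ huu' _ =>
  ENNReal.tsum_le_tsum fun w => mul_le_mul_right (huu' w) _

theorem tsumMulVecLin_tsum {ι : Type*} (u : ι → V → ℝ≥0∞) (v : V) :
    tsumMulVecLin A (fun w => ∑' i, u i w) v = ∑' i, tsumMulVecLin A (u i) v := by
  simp only [tsumMulVecLin_apply, ← ENNReal.tsum_mul_left]
  exact ENNReal.tsum_comm

theorem tsumMulVecLin_pow_succ_apply (n : ℕ) (k : V → ℝ≥0∞) :
    (tsumMulVecLin A ^ (n + 1)) k = tsumMulVecLin A ((tsumMulVecLin A ^ n) k) := by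
  rw [pow_succ', Module.End.mul_apply]

theorem potential_eq_add (k : V → ℝ≥0∞) :
    potential A k = k + tsumMulVecLin A (potential A k) := by
  funext v
  calc potential A k v
      = k v + ∑' n, (tsumMulVecLin A ^ (n + 1)) k v :=
        tsum_eq_zero_add' ENNReal.summable
    _ = k v + ∑' n, tsumMulVecLin A ((tsumMulVecLin A ^ n) k) v := by
        simp only [tsumMulVecLin_pow_succ_apply]
    _ = k v + tsumMulVecLin A (potential A k) v :=
        congrArg (k v + ·) (tsumMulVecLin_tsum _ v).symm

theorem sum_range_tsumMulVecLin_pow_le (hψ : k + tsumMulVecLin A ψ ≤ ψ) (n : ℕ) :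
    ∑ i ∈ Finset.range n, (tsumMulVecLin A ^ i) k ≤ ψ := by
  induction n with
  | zero => exact fun _ => zero_le
  | succ n ih =>
    calc ∑ i ∈ Finset.range (n + 1), (tsumMulVecLin A ^ i) k
        = k + tsumMulVecLin A (∑ i ∈ Finset.range n, (tsumMulVecLin A ^ i) k) := by
          simp only [Finset.sum_range_succ', tsumMulVecLin_pow_succ_apply, map_sum, pow_zero,
            Module.End.one_apply, add_comm]
      _ ≤ k + tsumMulVecLin A ψ := add_le_add_right (tsumMulVecLin_mono ih) k
      _ ≤ ψ := hψ

theorem potential_le (hψ : k + tsumMulVecLin A ψ ≤ ψ) : potential A k ≤ ψ := fun v =>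
  ENNReal.tsum_le_of_sum_range_le fun n => by
    simpa only [Finset.sum_apply] using sum_range_tsumMulVecLin_pow_le hψ n v

theorem add_tsumMulVecLin_add_potential (h k : V → ℝ≥0∞) :
    k + tsumMulVecLin A (h + potential A k) = tsumMulVecLin A h + potential A k := by
  rw [map_add, add_left_comm, ← potential_eq_add]

theorem eq_sub_of_add_eq_of_ne_top {u u' w : V → ℝ≥0∞} (hw : ∀ v, w v ≠ ⊤)
    (huw : u + w = u') : u = u' - w :=
  funext fun v => ENNReal.eq_sub_of_add_eq (hw v) (congrFun huw v)

theorem IsRieszDecomposition.add_tsumMulVecLin (hd : IsRieszDecomposition A ψ h k) :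
    k + tsumMulVecLin A ψ = ψ := by
  obtain ⟨hharm, rfl⟩ := hd
  rw [add_tsumMulVecLin_add_potential, hharm]

theorem isRieszDecomposition_of_add (hψ : k + tsumMulVecLin A ψ = ψ) (hd : ψ = h + potential A k)
    (hfin : ∀ v, potential A k v ≠ ⊤) : IsRieszDecomposition A ψ h k := by
  subst hd
  rw [add_tsumMulVecLin_add_potential] at hψ
  exact ⟨funext fun v => (ENNReal.add_left_inj (hfin v)).1 (congrFun hψ v), rfl⟩

theorem isRieszDecomposition_iff (hfin : ∀ v, ψ v ≠ ⊤) (hψ : tsumMulVecLin A ψ ≤ ψ) :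
    IsRieszDecomposition A ψ h k ↔ h = ψ - potential A k ∧ k = ψ - tsumMulVecLin A ψ := by
  have ne_top_of_le {u : V → ℝ≥0∞} (hu : u ≤ ψ) (v : V) : u v ≠ ⊤ :=
    ne_top_of_le_ne_top (hfin v) (hu v)
  constructor
  · intro hd
    have hpot : potential A k ≤ ψ := hd.2 ▸ le_add_self
    exact ⟨eq_sub_of_add_eq_of_ne_top (ne_top_of_le hpot) hd.2.symm,
      eq_sub_of_add_eq_of_ne_top (ne_top_of_le hψ) hd.add_tsumMulVecLin⟩
  · rintro ⟨rfl, hk⟩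
    have hkψ : k + tsumMulVecLin A ψ = ψ := hk ▸ tsub_add_cancel_of_le hψ
    have hpot : potential A k ≤ ψ := potential_le hkψ.le
    exact isRieszDecomposition_of_add hkψ (tsub_add_cancel_of_le hpot).symm (ne_top_of_le hpot)

end Potential

theorem stmt_0_general {V : Type*} (A : V → V → ℝ≥0∞) (ψ : V → ℝ≥0)
    (hψ : tsumMulVecLin A (fun v => ψ v) ≤ fun v => (ψ v : ℝ≥0∞)) :
    (∃! p : (V → ℝ≥0) × (V → ℝ≥0),
      IsRieszDecomposition A (fun v => ψ v) (fun v => p.1 v) fun v => p.2 v) ∧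
    ∀ p : (V → ℝ≥0) × (V → ℝ≥0),
      IsRieszDecomposition A (fun v => ψ v) (fun v => p.1 v) (fun v => p.2 v) →
      ∀ v, (p.2 v : ℝ≥0∞) = ψ v - tsumMulVecLin A (fun w => ψ w) v := by
  simp only [isRieszDecomposition_iff (fun _ => ENNReal.coe_ne_top) hψ]
  have sub_ne_top (u : V → ℝ≥0∞) (v : V) : ((fun w => (ψ w : ℝ≥0∞)) - u) v ≠ ⊤ :=
    ENNReal.sub_ne_top ENNReal.coe_ne_top
  refine ⟨?_, fun p hp => congrFun hp.2⟩
  lift (fun w => (ψ w : ℝ≥0∞)) - tsumMulVecLin A (fun w => ψ w) to V → ℝ≥0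
    using sub_ne_top _ with k
  obtain ⟨h, hh⟩ : ∃ h : V → ℝ≥0,
      (fun v => (h v : ℝ≥0∞)) = (fun w => (ψ w : ℝ≥0∞)) - potential A (fun w => k w) :=
    CanLift.prf _ (sub_ne_top _)
  have coe_injective : Function.Injective fun (u : V → ℝ≥0) v => (u v : ℝ≥0∞) :=
    ENNReal.coe_injective.comp_left
  refine ⟨(h, k), ⟨hh, rfl⟩, ?_⟩
  rintro ⟨h', k'⟩ ⟨hh', hk'⟩
  obtain rfl : k' = k := coe_injective hk'
  obtain rfl : h' = h := coe_injective (hh'.trans hh.symm)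
  rfl

namespace DirGraph

variable (G : DirGraph) (F : G.E → ℝ) (β : ℝ)

theorem tsum_Apow_mul (n : ℕ) (k : G.V → ℝ≥0∞) (v : G.V) :
    ∑' w, G.Apow F β n v w * k w = (tsumMulVecLin (G.Amat F β) ^ n) k v := by
  induction n generalizing v with
  | zero => simp [Apow]
  | succ n ih =>
    simp only [Apow, ← ENNReal.tsum_mul_right, tsumMulVecLin_pow_succ_apply, tsumMulVecLin_apply,
      ← ih, ← ENNReal.tsum_mul_left, mul_assoc]
    exact ENNReal.tsum_comm

theorem tsum_tsum_Apow_mul (k : G.V → ℝ≥0∞) (v : G.V) :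
    ∑' w, ∑' n, G.Apow F β n v w * k w = potential (G.Amat F β) k v := by
  rw [ENNReal.tsum_comm]
  exact tsum_congr fun n => G.tsum_Apow_mul F β n k v

theorem isRieszDecomposition_Amat_iff (ψ h k : G.V → ℝ≥0) :
    IsRieszDecomposition (G.Amat F β) (fun v => ψ v) (fun v => h v) (fun v => k v) ↔
      G.Harmonic F β h ∧ ∀ v : G.V, (ψ v : ℝ≥0∞) =
        (h v : ℝ≥0∞) + ∑' w : G.V, ∑' n : ℕ, G.Apow F β n v w * k w := by
  simp only [G.tsum_tsum_Apow_mul F β fun w => k w]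
  exact and_congr funext_iff funext_iff

end DirGraph

/-- the Riesz decomposition of a superharmonic vector. -/
theorem stmt_0 (G : DirGraph) (F : G.E → ℝ) (β : ℝ) (ψ : G.V → ℝ≥0)
    (hψ : ∀ v : G.V, ∑' w : G.V, G.Amat F β v w * ψ w ≤ (ψ v : ℝ≥0∞)) :
    (∃! p : (G.V → ℝ≥0) × (G.V → ℝ≥0),
        G.Harmonic F β p.1 ∧
        ∀ v : G.V, (ψ v : ℝ≥0∞) =
          (p.1 v : ℝ≥0∞) + ∑' w : G.V, ∑' n : ℕ, G.Apow F β n v w * p.2 w) ∧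
    ∀ p : (G.V → ℝ≥0) × (G.V → ℝ≥0),
      (G.Harmonic F β p.1 ∧
        ∀ v : G.V, (ψ v : ℝ≥0∞) =
          (p.1 v : ℝ≥0∞) + ∑' w : G.V, ∑' n : ℕ, G.Apow F β n v w * p.2 w) →
      ∀ v : G.V, (p.2 v : ℝ≥0∞) = (ψ v : ℝ≥0∞) - ∑' w : G.V, G.Amat F β v w * ψ w := by
  simpa only [G.isRieszDecomposition_Amat_iff, tsumMulVecLin_apply]
    using stmt_0_general (G.Amat F β) ψ hψ
end

section
/- Let h > 0 be a real number and let (I_j)_{j∈J} be a family of intervals contained in ]h,∞[, indexed by a nonempty finite or countably infinite set J, such that I_{j₀} = ]h,∞[ for at least one j₀ ∈ J. Then there exists a countable strongly connected row-finite directed graph G with infinitely many vertices, with adjacency matrix A, such that: (i) limsup_n (1/n) log Aⁿ_{vv} = h for every vertex v (so the Gurevich entropy of G equals h); (ii) Σ_{n≥0} Aⁿ_{vv} e^{−nh} = ∞ for every vertex v (G is recurrent); (iii) there is a bijection j ↦ τ(j) from J onto the set of exits of G such that for every β ∈ ℝ, every j ∈ J and every exit path t = (tᵢ) representing τ(j),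 one has [Σ_{n≥0} Aⁿ_{t₁t₁} e^{−nβ} < ∞ and sup_{k≥2} e^{(k−1)β} t(k)^{−1} Σ_{n≥0} Aⁿ_{t₁t_k} e^{−nβ} < ∞, where t(k) = A_{t₁t₂}A_{t₂t₃}⋯A_{t_{k−1}t_k}] if and only if β ∈ I_j. -/
open scoped ENNReal NNReal Classical
open Filter MeasureTheory

/-!
Fix a vertex `o` and give every edge the weight `q = e^{-β}`. Splitting paths at their last visit to
`o` gives `G(o, w) = G(o, o) φ(w)`, where `φ(w)` counts the paths from `o` to `w` that do not return
to `o`, and `G(o, o) = (1 - λ)⁻¹` with `λ` the total weight of the first returns to `o`.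

The graph has one ray of vertices for each `j`, and the ray `j₀` starts at `o` and has single edges.
Edges from vertices of the ray `j₀` enter each other ray at all its vertices, and every vertex is
joined to the tip of a long path back to `o`. These return paths can be taken so long that they
contribute less than `1` to `λ` at `β = h`, and extra edges from the ray `j₀` to `o` then make
`λ = 1` there. As `λ` is strictly increasing in `q`, `G(o, o) = ∞` exactly when `β ≤ h`.

Along the ray `j`, `φ` divided by the weight of the ray is the sequence of partial sums of
`∑ r, e^{rβ} (a₀ ⋯ a_{r-1})⁻¹ N_r e^{-(s_r + 1)β}`, a Laurent series in `e^β` whose coefficients are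
ratios of edge numbers and whose exponents are at our disposal. Any interval is the set of `β` where
such a series converges, since its two tails can be given any half-lines of convergence.
-/

section CauchyHadamard

variable {x : ℕ → ℝ≥0∞} {p q : ℝ≥0∞}

theorem limsup_rpow_inv_le_inv (hq : ∑' n, q ^ n * x n ≠ ⊤) :
    limsup (fun n : ℕ => x n ^ (n : ℝ)⁻¹) atTop ≤ q⁻¹ := by
  refine limsup_le_of_le (by isBoundedDefault) ?_
  filter_upwards [(ENNReal.tendsto_atTop_zero_of_tsum_ne_top hq).eventually_le_const one_pos,
    eventually_ne_atTop 0] with n hn hn₀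
  have le_inv_pow : x n ≤ q⁻¹ ^ n := by
    rw [← ENNReal.inv_pow, ENNReal.le_inv_iff_mul_le, mul_comm]
    exact hn
  calc x n ^ (n : ℝ)⁻¹ ≤ (q⁻¹ ^ n) ^ (n : ℝ)⁻¹ := by gcongr
    _ = q⁻¹ := ENNReal.pow_rpow_inv_natCast hn₀ _

theorem tsum_pow_mul_ne_top (hx : ∀ n, x n ≠ ⊤)
    (hq : limsup (fun n : ℕ => x n ^ (n : ℝ)⁻¹) atTop < q⁻¹) : ∑' n, q ^ n * x n ≠ ⊤ := by
  obtain ⟨r, hr, hrq⟩ := exists_between hq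
  have q_ne_top : q ≠ ⊤ := ENNReal.inv_ne_zero.1 (pos_of_gt hrq).ne'
  have mul_lt_one : q * r < 1 := by
    rw [mul_comm]
    exact ENNReal.mul_lt_of_lt_div (by rwa [one_div])
  obtain ⟨N, hN⟩ := eventually_atTop.1 ((eventually_lt_of_limsup_lt hr).and (eventually_ne_atTop 0))
  have le_pow : ∀ n, N ≤ n → x n ≤ r ^ n := fun n hn => by
    rw [← ENNReal.rpow_inv_natCast_pow (hN n hn).2 (x n)]
    exact pow_le_pow_left' (hN n hn).1.le n
  rw [← Summable.sum_add_tsum_nat_add' (k := N) ENNReal.summable]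
  refine ENNReal.add_ne_top.2 ⟨ENNReal.sum_ne_top.2 fun n _ =>
    ENNReal.mul_ne_top (ENNReal.pow_ne_top q_ne_top) (hx n), ?_⟩
  refine ne_top_of_le_ne_top (b := ∑' n, (q * r) ^ n) ?_ (ENNReal.tsum_le_tsum fun n => ?_)
  · simpa [ENNReal.tsum_geometric, tsub_eq_zero_iff_le] using mul_lt_one
  · calc q ^ (n + N) * x (n + N) ≤ (q * r) ^ (n + N) := by
          rw [mul_pow]
          gcongr
          exact le_pow _ le_add_self
      _ ≤ (q * r) ^ n := pow_le_pow_right_of_le_one' mul_lt_one.le le_self_add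

theorem limsup_rpow_inv_eq_inv (hp : p ≠ 0) (hx : ∀ q ≠ 0, ∑' n, q ^ n * x n = ⊤ ↔ p ≤ q) :
    limsup (fun n : ℕ => x n ^ (n : ℝ)⁻¹) atTop = p⁻¹ := by
  have term_ne_top : ∀ n, x n ≠ ⊤ := fun n hn => by
    obtain ⟨q, hq₀, hqp⟩ := exists_between (pos_iff_ne_zero.2 hp)
    refine hqp.not_ge ((hx q hq₀.ne').1 (ENNReal.tsum_eq_top_of_eq_top ⟨n, ?_⟩))
    rw [hn, ENNReal.mul_top (pow_ne_zero n hq₀.ne')]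
  refine le_antisymm (le_of_forall_gt_imp_ge_of_dense fun r hr => ?_) (le_of_not_gt fun hlt => ?_)
  · obtain rfl | hr_top := eq_or_ne r ⊤
    · exact le_top
    rw [← inv_inv r]
    exact limsup_rpow_inv_le_inv fun htop => (ENNReal.inv_lt_iff_inv_lt.1 hr).not_ge
      ((hx _ (ENNReal.inv_ne_zero.2 hr_top)).1 htop)
  · exact tsum_pow_mul_ne_top term_ne_top hlt ((hx p hp).2 le_rfl)

end CauchyHadamard

/-- Square matrices with entries in `[0, ∞]` over an arbitrary index type; products are infinite
sums, which always exist. -/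
abbrev InfMatrix (V : Type*) := V → V → ℝ≥0∞

/-- There is a path from `u` to `w` in the graph with adjacency matrix `A`. -/
abbrev Reaches {V : Type*} (A : V → V → ℕ) (u w : V) : Prop :=
  Relation.ReflTransGen (fun u w => A u w ≠ 0) u w

namespace InfMatrix

variable {V : Type*} (B : InfMatrix V)

section Green

/-- Matrix powers, with the same recursion as `DirGraph.Apow`. -/
noncomputable def power : ℕ → InfMatrix V
  | 0, u, w => if u = w then 1 else 0
  | n + 1, u, w => ∑' x, B u x * power n x w

/-- The Green function `G = ∑ₙ Bⁿ`. -/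
noncomputable def green (u w : V) : ℝ≥0∞ := ∑' n, B.power n u w

theorem power_add (m n : ℕ) (u w : V) :
    B.power (m + n) u w = ∑' x, B.power m u x * B.power n x w := by
  induction m generalizing u with
  | zero =>
    rw [tsum_eq_single u fun x hx => by simp [power, hx.symm]]
    simp [power]
  | succ m ih =>
    simp only [Nat.succ_add, power, ih, ← ENNReal.tsum_mul_left, ← ENNReal.tsum_mul_right]
    rw [ENNReal.tsum_comm]
    simp only [mul_assoc]

theorem power_one (u w : V) : B.power 1 u w = B u w := by
  simp only [power]
  rw [tsum_eq_single w fun x hx => by simp [hx]]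
  simp

theorem power_succ_right (n : ℕ) (u w : V) :
    B.power (n + 1) u w = ∑' x, B.power n u x * B x w := by
  simp only [power_add, power_one]

theorem power_mul_power_le (m n : ℕ) (u x w : V) :
    B.power m u x * B.power n x w ≤ B.power (m + n) u w := by
  rw [power_add]
  exact ENNReal.le_tsum x

variable {B} in
theorem power_mono {C : InfMatrix V} (hBC : B ≤ C) (n : ℕ) : B.power n ≤ C.power n := by
  induction n with
  | zero => exact le_rfl
  | succ n ih => exact fun u w => ENNReal.tsum_le_tsum fun x => mul_le_mul' (hBC u x) (ih x w)

variable {B} in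
theorem green_mono {C : InfMatrix V} (hBC : B ≤ C) (u w : V) : B.green u w ≤ C.green u w :=
  ENNReal.tsum_le_tsum fun n => power_mono hBC n u w

theorem green_eq (u w : V) :
    B.green u w = (if u = w then 1 else 0) + ∑' x, B.green u x * B x w := by
  unfold green
  rw [tsum_eq_zero_add' ENNReal.summable]
  simp only [← ENNReal.tsum_mul_right, power_succ_right]
  rw [ENNReal.tsum_comm]
  rfl

theorem power_mul_green_le (m : ℕ) (u x w : V) :
    B.power m u x * B.green x w ≤ B.green u w := by
  unfold green
  rw [← ENNReal.tsum_mul_left]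
  exact (ENNReal.tsum_le_tsum fun n => B.power_mul_power_le m n u x w).trans
    (ENNReal.tsum_comp_le_tsum_of_injective (add_right_injective m) fun n => B.power n u w)

theorem green_mul_power_le (m : ℕ) (u x w : V) :
    B.green u x * B.power m x w ≤ B.green u w := by
  unfold green
  rw [← ENNReal.tsum_mul_right]
  exact (ENNReal.tsum_le_tsum fun n => B.power_mul_power_le n m u x w).trans
    (ENNReal.tsum_comp_le_tsum_of_injective (add_left_injective m) fun n => B.power n u w)

variable {B} in
theorem mul_green_le {φ : V → ℝ≥0∞} {o : V} {ε : ℝ≥0∞}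
    (hφ : ∀ w, (if o = w then ε else 0) + ∑' x, φ x * B x w ≤ φ w) (w : V) :
    ε * B.green o w ≤ φ w := by
  have partial_le : ∀ M w, ∑ n ∈ Finset.range M, ε * B.power n o w ≤ φ w := by
    intro M
    induction M with
    | zero => simp
    | succ M ih =>
      intro w
      calc ∑ n ∈ Finset.range (M + 1), ε * B.power n o w
          = (if o = w then ε else 0)
              + ∑' x, (∑ n ∈ Finset.range M, ε * B.power n o x) * B x w := by
            rw [Finset.sum_range_succ', add_comm]
            congr 1
            · simp [power]
            · simp only [power_succ_right, ← ENNReal.tsum_mul_left, Finset.sum_mul, mul_assoc]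
              exact (Summable.tsum_finsetSum fun _ _ => ENNReal.summable).symm
        _ ≤ (if o = w then ε else 0) + ∑' x, φ x * B x w := by
            gcongr with x
            exact ih x
        _ ≤ φ w := hφ w
  unfold green
  rw [← ENNReal.tsum_mul_left, ENNReal.tsum_eq_iSup_nat]
  exact iSup_le fun M => partial_le M w

end Green

section FirstPassage

variable (o : V)

/-- `B` with the transitions into `o` removed. -/
noncomputable def taboo : InfMatrix V := fun x w => if w = o then 0 else B x w

/-- The total weight of the paths from `o` to `w` that never return to `o`. -/
noncomputable def firstPassage (w : V) : ℝ≥0∞ := (B.taboo o).green o w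

/-- The total weight of the first returns to `o`. -/
noncomputable def returnWeight : ℝ≥0∞ := ∑' x, B.firstPassage o x * B x o

theorem firstPassage_self : B.firstPassage o o = 1 := by
  rw [firstPassage, green_eq]
  simp [taboo]

variable {o} in
theorem firstPassage_of_ne {w : V} (hw : w ≠ o) :
    B.firstPassage o w = ∑' x, B.firstPassage o x * B x w := by
  rw [firstPassage, green_eq]
  simp [taboo, hw, hw.symm, firstPassage]

variable {B o} in
theorem mul_firstPassage_le {φ : V → ℝ≥0∞} {ε : ℝ≥0∞} (ho : ε ≤ φ o)
    (hφ : ∀ w ≠ o, ∑' x, φ x * B x w ≤ φ w) (w : V) : ε * B.firstPassage o w ≤ φ w := by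
  refine mul_green_le (fun w => ?_) w
  obtain rfl | hw := eq_or_ne w o
  · simpa [taboo] using ho
  · simpa [taboo, hw, hw.symm] using hφ w hw

theorem green_self_eq_one_add :
    B.green o o = 1 + ∑' x, B.green o x * B x o := by
  simpa using B.green_eq o o

theorem green_eq_mul_firstPassage (w : V) : B.green o w = B.green o o * B.firstPassage o w := by
  have mul_firstPassage_le_green : ∀ x, B.green o o * B.firstPassage o x ≤ B.green o x :=
    mul_firstPassage_le le_rfl fun x _ => by
      rw [B.green_eq o x]
      exact le_add_self
  refine le_antisymm ?_ (mul_firstPassage_le_green w)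
  rw [← one_mul (B.green o w)]
  refine mul_green_le (φ := fun x => B.green o o * B.firstPassage o x) (fun x => ?_) w
  obtain rfl | hx := eq_or_ne x o
  · calc (if x = x then 1 else 0) + ∑' y, B.green x x * B.firstPassage x y * B y x
        ≤ 1 + ∑' y, B.green x y * B y x := by
          rw [if_pos rfl]
          gcongr
          exact mul_firstPassage_le_green _
      _ = B.green x x * B.firstPassage x x := by
          rw [← green_self_eq_one_add, firstPassage_self, mul_one]
  · rw [if_neg hx.symm, zero_add, B.firstPassage_of_ne hx, ← ENNReal.tsum_mul_left]
    simp only [mul_assoc, le_refl]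

theorem green_self : B.green o o = (1 - B.returnWeight o)⁻¹ := by
  have renewal : B.green o o = 1 + B.green o o * B.returnWeight o := by
    conv_lhs => rw [green_self_eq_one_add]
    simp only [returnWeight, ← ENNReal.tsum_mul_left, ← mul_assoc, ← green_eq_mul_firstPassage]
  obtain hlt | hge := lt_or_ge (B.returnWeight o) 1
  · have sub_ne_zero : 1 - B.returnWeight o ≠ 0 := (tsub_pos_of_lt hlt).ne'
    have sub_ne_top : 1 - B.returnWeight o ≠ ⊤ := ENNReal.sub_ne_top ENNReal.one_ne_top
    have green_ne_top : B.green o o ≠ ⊤ := by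
      have one_sub_mul_green_le : (1 - B.returnWeight o) * B.green o o ≤ 1 := by
        rw [← B.firstPassage_self o]
        refine mul_green_le (fun w => ?_) o
        obtain rfl | hw := eq_or_ne w o
        · rw [if_pos rfl, firstPassage_self]
          exact (tsub_add_cancel_of_le hlt.le).le
        · rw [if_neg hw.symm, zero_add, ← B.firstPassage_of_ne hw]
      exact (ENNReal.lt_top_of_mul_ne_top_right
        (ne_top_of_le_ne_top ENNReal.one_ne_top one_sub_mul_green_le) sub_ne_zero).ne
    refine ENNReal.eq_inv_of_mul_eq_one_left ?_
    rw [ENNReal.mul_sub fun _ _ => green_ne_top, mul_one]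
    nth_rw 1 [renewal]
    exact ENNReal.add_sub_cancel_right (ENNReal.mul_ne_top green_ne_top hlt.ne_top)
  · rw [tsub_eq_zero_of_le hge, ENNReal.inv_zero]
    by_contra green_ne_top
    have add_le : 1 + B.green o o ≤ B.green o o := by
      conv_rhs => rw [renewal]
      gcongr
      exact le_mul_of_one_le_right' hge
    exact (ENNReal.lt_add_right green_ne_top one_ne_zero).not_ge (add_comm _ (1 : ℝ≥0∞) ▸ add_le)

end FirstPassage

section Irreducible

/-- Every entry of some power of `B` is nonzero: the underlying graph is strongly connected. -/
def Irreducible : Prop := ∀ u w, ∃ n, B.power n u w ≠ 0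

variable {B}

theorem Irreducible.green_eq_top (hB : B.Irreducible) {o : V} (ho : B.green o o = ⊤) (u w : V) :
    B.green u w = ⊤ := by
  obtain ⟨m, hm⟩ := hB u o
  obtain ⟨n, hn⟩ := hB o w
  have green_right : B.green o w = ⊤ :=
    top_le_iff.1 ((ENNReal.top_mul hn).ge.trans (ho ▸ B.green_mul_power_le n o o w))
  exact top_le_iff.1 ((ENNReal.mul_top hm).ge.trans (green_right ▸ B.power_mul_green_le m u o w))

end Irreducible

section Exit

/-- The weight of the first `k` steps of `t`. -/
noncomputable def pathWeight (t : ℕ → V) (k : ℕ) : ℝ≥0∞ :=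
  ∏ i ∈ Finset.range k, B (t i) (t (i + 1))

/-- The supremum along `t` of the Green function from `o`, normalized by the weight of `t`. Its
finiteness is the condition on an exit path in the theorem; allowing an arbitrary base point `o`
makes visible that the condition only depends on the tail of `t`. -/
noncomputable def exitSup (o : V) (t : ℕ → V) : ℝ≥0∞ :=
  ⨆ k, (B.pathWeight t k)⁻¹ * B.green o (t k)

variable {B}

theorem Irreducible.exitSup_ne_top (hB : B.Irreducible) {o : V} {t : ℕ → V}
    (ho : B.exitSup o t ≠ ⊤) (u : V) : B.exitSup u t ≠ ⊤ := by
  obtain ⟨m, hm⟩ := hB o u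
  have power_mul_le : B.power m o u * B.exitSup u t ≤ B.exitSup o t := by
    rw [exitSup, ENNReal.mul_iSup]
    refine iSup_mono fun k => ?_
    rw [mul_left_comm]
    gcongr
    exact B.power_mul_green_le m o u (t k)
  exact (ENNReal.lt_top_of_mul_ne_top_right (ne_top_of_le_ne_top ho power_mul_le) hm).ne

variable {t : ℕ → V} (ht₀ : ∀ i, B (t i) (t (i + 1)) ≠ 0) (ht : ∀ i, B (t i) (t (i + 1)) ≠ ⊤)
include ht₀ ht

theorem monotone_inv_pathWeight_mul_green (o : V) :
    Monotone fun k => (B.pathWeight t k)⁻¹ * B.green o (t k) := by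
  refine monotone_nat_of_le_succ fun k => ?_
  rw [pathWeight, pathWeight, Finset.prod_range_succ,
    ENNReal.mul_inv (.inr (ht k)) (.inr (ht₀ k)), mul_assoc]
  gcongr
  rw [mul_comm, ← div_eq_mul_inv, ENNReal.le_div_iff_mul_le (.inl (ht₀ k)) (.inl (ht k)),
    ← power_one B]
  exact B.green_mul_power_le 1 o (t k) (t (k + 1))

theorem iSup_succ_ne_top_iff_exitSup_ne_top (o : V) :
    (B.green o (t 0) ≠ ⊤ ∧
      ⨆ k, (B.pathWeight t (k + 1))⁻¹ * B.green o (t (k + 1)) ≠ ⊤) ↔ B.exitSup o t ≠ ⊤ := by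
  rw [(monotone_inv_pathWeight_mul_green ht₀ ht o).iSup_nat_add 1]
  exact and_iff_right_of_imp fun h =>
    ne_top_of_le_ne_top h (le_iSup_of_le 0 (by simp [pathWeight]))

theorem exitSup_ne_top_shift_iff (o : V) (N : ℕ) :
    B.exitSup o (fun i => t (N + i)) ≠ ⊤ ↔ B.exitSup o t ≠ ⊤ := by
  have weight_ne_zero : B.pathWeight t N ≠ 0 := Finset.prod_ne_zero_iff.2 fun i _ => ht₀ i
  have weight_ne_top : B.pathWeight t N ≠ ⊤ := ENNReal.prod_ne_top fun i _ => ht i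
  have exitSup_eq :
      B.exitSup o t = (B.pathWeight t N)⁻¹ * B.exitSup o (fun i => t (N + i)) := by
    rw [exitSup, ← (monotone_inv_pathWeight_mul_green ht₀ ht o).iSup_nat_add N, exitSup,
      ENNReal.mul_iSup]
    refine iSup_congr fun k => ?_
    rw [← mul_assoc, ← ENNReal.mul_inv (.inl weight_ne_zero) (.inl weight_ne_top), add_comm k N,
      pathWeight, Finset.prod_range_add]
    rfl
  simp [exitSup_eq, ENNReal.mul_eq_top, weight_ne_zero, weight_ne_top]

theorem Irreducible.exitSup_ne_top_iff_of_tail_eq (hB : B.Irreducible) {t' : ℕ → V}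
    (ht₀' : ∀ i, B (t' i) (t' (i + 1)) ≠ 0) (ht' : ∀ i, B (t' i) (t' (i + 1)) ≠ ⊤) {M N : ℕ}
    (htail : ∀ i, t (M + i) = t' (N + i)) (o o' : V) :
    B.exitSup o t ≠ ⊤ ↔ B.exitSup o' t' ≠ ⊤ := by
  rw [← exitSup_ne_top_shift_iff ht₀ ht o M, funext htail, exitSup_ne_top_shift_iff ht₀' ht' o N]
  exact ⟨fun h => hB.exitSup_ne_top h o', fun h => hB.exitSup_ne_top h o⟩

end Exit

section Scaled

variable (A : V → V → ℕ)

/-- The matrix `q • A` of a graph with `A u w` edges from `u` to `w`, each of weight `q`. -/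
noncomputable def scaled (q : ℝ≥0∞) : InfMatrix V := fun u w => A u w * q

theorem tsum_mul_scaled (q : ℝ≥0∞) (φ : V → ℝ≥0∞) (w : V) :
    ∑' v, φ v * scaled A q v w = (∑' v, φ v * A v w) * q := by
  simp only [scaled, ← mul_assoc, ENNReal.tsum_mul_right]

theorem power_scaled (q : ℝ≥0∞) (n : ℕ) (u w : V) :
    (scaled A q).power n u w = q ^ n * (scaled A 1).power n u w := by
  induction n generalizing u with
  | zero => simp [power]
  | succ n ih =>
    simp only [power, ih, ← ENNReal.tsum_mul_left]
    refine tsum_congr fun x => ?_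
    simp only [scaled, mul_one]
    ring

theorem taboo_scaled (q : ℝ≥0∞) (o : V) :
    (scaled A q).taboo o = scaled (fun u w => if w = o then 0 else A u w) q := by
  ext u w
  simp only [taboo, scaled]
  split_ifs <;> simp

variable {A}

theorem scaled_ne_zero {q : ℝ≥0∞} (hq : q ≠ 0) {u w : V} (huw : A u w ≠ 0) :
    scaled A q u w ≠ 0 :=
  mul_ne_zero (Nat.cast_ne_zero.2 huw) hq

theorem scaled_ne_top {q : ℝ≥0∞} (hq : q ≠ ⊤) {u w : V} : scaled A q u w ≠ ⊤ :=
  ENNReal.mul_ne_top (ENNReal.natCast_ne_top _) hq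

theorem scaled_mono {p q : ℝ≥0∞} (hpq : p ≤ q) : scaled A p ≤ scaled A q :=
  fun _ _ => mul_le_mul_right hpq _

theorem exists_power_scaled_ne_zero {q : ℝ≥0∞} (hq : q ≠ 0) {u w : V}
    (huw : Reaches A u w) :
    ∃ n, (scaled A q).power n u w ≠ 0 := by
  induction huw using Relation.ReflTransGen.head_induction_on with
  | refl => exact ⟨0, by simp [power]⟩
  | @head x y hxy _ ih =>
    obtain ⟨n, hn⟩ := ih
    refine ⟨n + 1, fun hzero => mul_ne_zero (scaled_ne_zero hq hxy) hn ?_⟩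
    rw [power, ENNReal.tsum_eq_zero] at hzero
    exact hzero y

theorem green_scaled_eq_top_iff {o : V} {p : ℝ≥0∞}
    (hreturn : (scaled A p).returnWeight o = 1) (q : ℝ≥0∞) :
    (scaled A q).green o o = ⊤ ↔ p ≤ q := by
  have returnWeight_eq : ∀ r, (scaled A r).returnWeight o =
      (∑' x, (scaled A r).firstPassage o x * A x o) * r := fun r => by
    rw [returnWeight, tsum_mul_scaled]
  have firstPassage_mono : ∀ {r s}, r ≤ s →
      (scaled A r).firstPassage o ≤ (scaled A s).firstPassage o := fun hrs x => by
    simp only [firstPassage, taboo_scaled]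
    exact green_mono (scaled_mono hrs) o x
  rw [green_self, ENNReal.inv_eq_top, tsub_eq_zero_iff_le]
  constructor
  · intro hq
    obtain hpq | hqp := le_or_gt p q
    · exact hpq
    calc p ≤ p * (scaled A q).returnWeight o := le_mul_of_one_le_right' hq
      _ ≤ p * ((∑' x, (scaled A p).firstPassage o x * A x o) * q) := by
        rw [returnWeight_eq]
        gcongr with x
        exact firstPassage_mono hqp.le x
      _ = q := by
        rw [← mul_assoc, mul_comm p, ← returnWeight_eq, hreturn, one_mul]
  · intro hpq
    rw [← hreturn, returnWeight_eq, returnWeight_eq]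
    gcongr with x
    exact firstPassage_mono hpq x

variable (hA : ∀ u w, Reaches A u w)
include hA

theorem irreducible_scaled {q : ℝ≥0∞} (hq : q ≠ 0) : (scaled A q).Irreducible :=
  fun u w => exists_power_scaled_ne_zero hq (hA u w)

theorem limsup_power_scaled_one {o : V} {p : ℝ≥0∞} (hp : p ≠ 0)
    (hreturn : (scaled A p).returnWeight o = 1) (v : V) :
    limsup (fun n : ℕ => (scaled A 1).power n v v ^ (n : ℝ)⁻¹) atTop = p⁻¹ := by
  refine limsup_rpow_inv_eq_inv hp fun q hq => ?_
  rw [← green_scaled_eq_top_iff hreturn q]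
  simp only [← power_scaled]
  exact ⟨fun htop => (irreducible_scaled hA hq).green_eq_top htop o o,
    fun htop => (irreducible_scaled hA hq).green_eq_top htop v v⟩

end Scaled

end InfMatrix

section Expansion

theorem exists_nat_tsum_mul_eq {w : ℕ → ℝ≥0} (hw : ∀ n, w n ≠ 0)
    (hw_lim : Tendsto w atTop (nhds 0)) (y : ℝ≥0) :
    ∃ l : ℕ → ℕ, ∑' n, (l n : ℝ≥0∞) * w n = y := by
  let rem : ℕ → ℝ≥0 := Nat.rec y fun n r => r - ⌊r / w n⌋₊ * w n
  have digit_mul_le : ∀ n, ⌊rem n / w n⌋₊ * w n ≤ rem n := fun n =>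
    (le_div_iff₀ (pos_iff_ne_zero.2 (hw n))).1 (Nat.floor_le zero_le)
  have rem_succ_le : ∀ n, rem (n + 1) ≤ w n := fun n => by
    refine tsub_le_iff_right.2 ?_
    rw [← one_add_mul, add_comm]
    exact (div_le_iff₀ (pos_iff_ne_zero.2 (hw n))).1 (Nat.lt_floor_add_one _).le
  have rem_lim : Tendsto rem atTop (nhds 0) :=
    (tendsto_add_atTop_iff_nat 1).1
      (tendsto_of_tendsto_of_tendsto_of_le_of_le tendsto_const_nhds hw_lim
        (fun _ => zero_le) rem_succ_le)
  have partial_sum_add_rem : ∀ n, ∑ i ∈ Finset.range n, ⌊rem i / w i⌋₊ * w i + rem n = y := by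
    intro n
    induction n with
    | zero => simp [rem]
    | succ n ih =>
      rw [Finset.sum_range_succ, add_assoc, ← ih]
      congr 1
      exact add_tsub_cancel_of_le (digit_mul_le n)
  have digits_hasSum : HasSum (fun n => (⌊rem n / w n⌋₊ * w n : ℝ≥0)) y := by
    rw [NNReal.hasSum_iff_tendsto_nat]
    have diff_lim : Tendsto (fun n => y - rem n) atTop (nhds (y - 0)) :=
      tendsto_const_nhds.sub rem_lim
    rw [tsub_zero] at diff_lim
    exact diff_lim.congr fun n => by rw [← partial_sum_add_rem n, add_tsub_cancel_right]
  refine ⟨fun n => ⌊rem n / w n⌋₊, ?_⟩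
  exact_mod_cast (ENNReal.hasSum_coe.2 digits_hasSum).tsum_eq

theorem exists_tsum_mul_pow_lt {ι : Type*} [Countable ι] {f : ι → ℝ≥0∞} (hf : ∀ i, f i ≠ ⊤)
    {q ε : ℝ≥0∞} (hq : q < 1) (hε : ε ≠ 0) (m : ι → ℕ) :
    ∃ d : ι → ℕ, (∀ i, m i ≤ d i) ∧ ∑' i, f i * q ^ d i < ε := by
  obtain ⟨δ, hδ, hδ_sum⟩ := ENNReal.exists_pos_sum_of_countable' hε ι
  have eventually_le : ∀ i, ∀ᶠ n in atTop, m i ≤ n ∧ f i * q ^ n ≤ δ i := fun i => by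
    have mul_pow_lim : Tendsto (fun n => f i * q ^ n) atTop (nhds 0) := by
      simpa using ENNReal.Tendsto.const_mul
        (ENNReal.tendsto_pow_atTop_nhds_zero_of_lt_one hq) (.inr (hf i))
    exact (eventually_ge_atTop (m i)).and (mul_pow_lim.eventually_le_const (hδ i))
  choose d hd using fun i => (eventually_le i).exists
  exact ⟨d, fun i => (hd i).1, (ENNReal.tsum_le_tsum fun i => (hd i).2).trans_lt hδ_sum⟩

theorem exists_nat_div_prod_approx {c : ℕ → ℝ} (hc : ∀ r, 0 ≤ c r) (hc₀ : 1 ≤ c 0) :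
    ∃ a N : ℕ → ℕ, (∀ i, a i ≠ 0) ∧ N 0 ≠ 0 ∧
      ∀ r, c r ≤ N r / ∏ i ∈ Finset.range r, (a i : ℝ) ∧
        N r / ∏ i ∈ Finset.range r, (a i : ℝ) ≤ 2 * c r := by
  let a : ℕ → ℕ := fun i => ⌈(c (i + 1))⁻¹⌉₊ + 1
  let P : ℕ → ℝ := fun r => ∏ i ∈ Finset.range r, (a i : ℝ)
  have one_le_prod : ∀ r, 1 ≤ P r := fun r =>
    Finset.prod_induction _ (1 ≤ ·) (fun _ _ => one_le_mul_of_one_le_of_one_le) le_rfl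
      fun i _ => by simp [a]
  have zero_or_one_le : ∀ r, c r = 0 ∨ 1 ≤ c r * P r := by
    rintro (_ | r)
    · exact .inr (by simpa [P] using hc₀)
    · obtain hzero | hpos := (hc (r + 1)).eq_or_lt
      · exact .inl hzero.symm
      · refine .inr ((inv_le_iff_one_le_mul₀' hpos).1 ?_)
        calc (c (r + 1))⁻¹ ≤ a r := (Nat.le_ceil _).trans (by simp [a])
          _ ≤ P r * a r := le_mul_of_one_le_left (by positivity) (one_le_prod r)
          _ = P (r + 1) := (Finset.prod_range_succ _ _).symm
  refine ⟨a, fun r => ⌈c r * P r⌉₊, fun i => Nat.succ_ne_zero _, ?_, fun r => ?_⟩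
  · exact (Nat.ceil_pos.2 (by simpa [P] using one_pos.trans_le hc₀)).ne'
  · have prod_pos : 0 < P r := one_pos.trans_le (one_le_prod r)
    rw [le_div_iff₀ prod_pos, div_le_iff₀ prod_pos]
    refine ⟨Nat.le_ceil _, ?_⟩
    obtain hzero | hone := zero_or_one_le r
    · simp [hzero]
    · linarith [Nat.ceil_lt_add_one (zero_le_one.trans hone)]

end Expansion

section Intervals

theorem isLowerSet_eq_cases {α : Type*} [ConditionallyCompleteLinearOrder α] {S : Set α}
    (hS : IsLowerSet S) :
    S = ∅ ∨ S = Set.univ ∨ ∃ a, S = Set.Iio a ∨ S = Set.Iic a := by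
  obtain rfl | hne := S.eq_empty_or_nonempty
  · exact .inl rfl
  by_cases hbdd : BddAbove S
  · refine .inr (.inr ⟨sSup S, ?_⟩)
    by_cases hmem : sSup S ∈ S
    · exact .inr (Set.Subset.antisymm (fun x hx => le_csSup hbdd hx) fun x hx => hS hx hmem)
    · refine .inl (Set.Subset.antisymm (fun x hx => ?_) fun x hx => ?_)
      · exact (le_csSup hbdd hx).lt_of_ne fun h => hmem (h ▸ hx)
      · obtain ⟨y, hy, hxy⟩ := exists_lt_of_lt_csSup hne hx
        exact hS hxy.le hy
  · refine .inr (.inl (Set.eq_univ_of_forall fun x => ?_))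
    obtain ⟨y, hy, hxy⟩ := not_bddAbove_iff.1 hbdd x
    exact hS hxy.le hy

theorem not_summable_factorial_mul_pow {x : ℝ} (hx : x ≠ 0) :
    ¬ Summable fun i : ℕ => (i.factorial : ℝ) * x ^ i := by
  intro hsum
  have mul_lim := hsum.tendsto_atTop_zero.mul (FloorSemiring.tendsto_pow_div_factorial_atTop x⁻¹)
  have mul_eq_one : ∀ i : ℕ, (i.factorial : ℝ) * x ^ i * (x⁻¹ ^ i / i.factorial) = 1 := fun i => by
    have := i.factorial_ne_zero
    rw [inv_pow]
    field_simp
  simp only [mul_eq_one, mul_zero, tendsto_const_nhds_iff, one_ne_zero] at mul_lim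

theorem summable_pow_div_succ_sq_iff {x : ℝ} (hx : 0 ≤ x) :
    Summable (fun i : ℕ => x ^ i / ((i : ℝ) + 1) ^ 2) ↔ x ≤ 1 := by
  constructor
  · intro hsum
    by_contra! hx_gt
    have term_lim := hsum.tendsto_atTop_zero
    have inv_lim : Tendsto (fun i : ℕ => ((i + 1 : ℕ) : ℝ) ^ 2 / x ^ (i + 1)) atTop (nhds 0) :=
      (tendsto_add_atTop_iff_nat 1).2 (tendsto_pow_const_div_const_pow_of_one_lt 2 hx_gt)
    have mul_eq : ∀ i : ℕ, x ^ i / ((i : ℝ) + 1) ^ 2 * (((i + 1 : ℕ) : ℝ) ^ 2 / x ^ (i + 1)) =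
        x⁻¹ := fun i => by
      push_cast
      field_simp
      ring
    have mul_lim := term_lim.mul inv_lim
    simp only [mul_eq, mul_zero, tendsto_const_nhds_iff, inv_eq_zero] at mul_lim
    linarith
  · intro hx_le
    have sq_summable : Summable fun i : ℕ => 1 / (((i + 1 : ℕ) : ℝ)) ^ 2 :=
      (summable_nat_add_iff 1).2 (Real.summable_one_div_nat_pow.2 one_lt_two)
    refine sq_summable.of_nonneg_of_le (fun i => by positivity) fun i => ?_
    push_cast
    gcongr
    exact pow_le_one₀ hx hx_le

theorem exists_power_series_summable_iff {S : Set ℝ} (hS : IsLowerSet S) :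
    ∃ d : ℕ → ℝ, d 0 = 1 ∧ (∀ i, 0 ≤ d i) ∧
      ∀ β, (Summable fun i => d i * Real.exp β ^ i) ↔ β ∈ S := by
  have mul_pow_eq : ∀ a β : ℝ, ∀ i : ℕ,
      Real.exp (-a) ^ i * Real.exp β ^ i = Real.exp (β - a) ^ i := fun a β i => by
    rw [← mul_pow, ← Real.exp_add, neg_add_eq_sub]
  obtain rfl | rfl | ⟨a, rfl | rfl⟩ := isLowerSet_eq_cases hS
  · refine ⟨fun i => i.factorial, by simp, fun i => by positivity, fun β => ?_⟩
    simpa using not_summable_factorial_mul_pow (Real.exp_ne_zero β)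
  · refine ⟨fun i => (i.factorial : ℝ)⁻¹, by simp, fun i => by positivity, fun β => ?_⟩
    simpa [div_eq_inv_mul] using Real.summable_pow_div_factorial (Real.exp β)
  · refine ⟨fun i => Real.exp (-a) ^ i, by simp, fun i => by positivity, fun β => ?_⟩
    simp [mul_pow_eq, summable_geometric_iff_norm_lt_one]
  · refine ⟨fun i => Real.exp (-a) ^ i / ((i : ℝ) + 1) ^ 2, by simp, fun i => by positivity,
      fun β => ?_⟩
    simp [div_mul_eq_mul_div, mul_pow_eq, summable_pow_div_succ_sq_iff (Real.exp_pos _).le]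

theorem exists_laurent_series_summable_iff {S : Set ℝ} (hS : S.OrdConnected) :
    ∃ c : ℤ → ℝ, c 0 = 1 ∧ (∀ z, 0 ≤ c z) ∧
      ∀ β, (Summable fun z => c z * Real.exp β ^ z) ↔ β ∈ S := by
  have neg_isLowerSet : IsLowerSet {β | -β ∈ upperClosure S} :=
    fun _ _ hle hmem => (upperClosure S).upper (neg_le_neg hle) hmem
  obtain ⟨d, hd₀, hd, hd_iff⟩ := exists_power_series_summable_iff (lowerClosure S).lower
  obtain ⟨e, he₀, he, he_iff⟩ := exists_power_series_summable_iff neg_isLowerSet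
  refine ⟨fun z => d z.toNat * e (-z).toNat, by simp [hd₀, he₀],
    fun z => mul_nonneg (hd _) (he _), fun β => ?_⟩
  rw [summable_int_iff_summable_nat_and_neg, ← hS.upperClosure_inter_lowerClosure, and_comm]
  refine and_congr ?_ ?_
  · have mem_iff := he_iff (-β)
    simp only [Set.mem_ofPred_eq, neg_neg] at mem_iff
    simpa [hd₀, Real.exp_neg] using mem_iff
  · simpa [he₀] using hd_iff β

end Intervals

section Boltzmann

/-- The weight `e^{-β}` of an edge, as an extended nonnegative real. -/
noncomputable def boltz (β : ℝ) : ℝ≥0∞ := ENNReal.ofReal (Real.exp (-β))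

theorem boltz_ne_zero (β : ℝ) : boltz β ≠ 0 :=
  (ENNReal.ofReal_pos.2 (Real.exp_pos _)).ne'

theorem boltz_ne_top (β : ℝ) : boltz β ≠ ⊤ := ENNReal.ofReal_ne_top

theorem boltz_le_boltz_iff {β γ : ℝ} : boltz β ≤ boltz γ ↔ γ ≤ β := by
  rw [boltz, boltz, ENNReal.ofReal_le_ofReal_iff (Real.exp_pos _).le, Real.exp_le_exp,
    neg_le_neg_iff]

theorem boltz_lt_one {β : ℝ} (hβ : 0 < β) : boltz β < 1 := by
  rw [boltz, ENNReal.ofReal_lt_one, Real.exp_lt_one_iff]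
  exact neg_lt_zero.2 hβ

theorem inv_prod_mul_boltz_eq (a : ℕ → ℕ) (ha : ∀ i, a i ≠ 0) (N r s : ℕ) (β : ℝ) :
    (∏ i ∈ Finset.range r, (a i * boltz β))⁻¹ * (N * boltz β ^ s) =
      ENNReal.ofReal (N / (∏ i ∈ Finset.range r, (a i : ℝ)) * Real.exp β ^ ((r : ℤ) - s)) := by
  have factor_pos : ∀ i, 0 < (a i : ℝ) * Real.exp (-β) := fun i =>
    mul_pos (Nat.cast_pos.2 (ha i).bot_lt) (Real.exp_pos _)
  have factor_eq : ∀ i, (a i : ℝ≥0∞) * boltz β = ENNReal.ofReal (a i * Real.exp (-β)) :=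
    fun i => by rw [ENNReal.ofReal_mul (by positivity), ENNReal.ofReal_natCast, boltz]
  simp only [factor_eq]
  rw [← ENNReal.ofReal_prod_of_nonneg fun i _ => (factor_pos i).le,
    ← ENNReal.ofReal_inv_of_pos (Finset.prod_pos fun i _ => factor_pos i),
    boltz, ← ENNReal.ofReal_pow (Real.exp_pos _).le, ← ENNReal.ofReal_natCast,
    ← ENNReal.ofReal_mul (by positivity), ← ENNReal.ofReal_mul (by positivity)]
  congr 1
  rw [Finset.prod_mul_distrib, Finset.prod_const, Finset.card_range, Real.exp_neg,
    zpow_sub₀ (Real.exp_ne_zero β), zpow_natCast, zpow_natCast]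
  simp only [inv_pow]
  field_simp

theorem two_mul_le_intEquivNat (z : ℤ) : 2 * z ≤ Equiv.intEquivNat z := by
  cases z with
  | ofNat n => exact le_rfl
  | negSucc n =>
    change 2 * Int.negSucc n ≤ ((2 * n + 1 : ℕ) : ℤ)
    lia

/-- A Laurent series in `e^β` with coefficients comparable to `N r / (a 0 ⋯ a (r - 1))`, reindexed
by `ℕ`: the exponent of the `r`-th term is `r - s r`. -/
theorem exists_boltz_series_ne_top_iff {S : Set ℝ} (hS : S.OrdConnected) :
    ∃ a N s : ℕ → ℕ, (∀ i, a i ≠ 0) ∧ N 0 ≠ 0 ∧ (∀ m, {r | s r ≤ m}.Finite) ∧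
      ∀ β, ∑' r, (∏ i ∈ Finset.range r, (a i * boltz β))⁻¹ * (N r * boltz β ^ s r) ≠ ⊤ ↔
        β ∈ S := by
  obtain ⟨c, hc₀, hc, hc_iff⟩ := exists_laurent_series_summable_iff hS
  let z : ℕ → ℤ := Equiv.intEquivNat.symm
  have two_mul_z_le : ∀ r, 2 * z r ≤ r := fun r => by
    simpa [z] using two_mul_le_intEquivNat (z r)
  obtain ⟨a, N, ha, hN, happrox⟩ := exists_nat_div_prod_approx (fun r => hc (z r)) hc₀.ge
  refine ⟨a, N, fun r => (r - z r).toNat, ha, hN, fun m => ?_, fun β => ?_⟩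
  · refine (Set.finite_Iic (2 * m)).subset fun r hr => ?_
    have := two_mul_z_le r
    simp only [Set.mem_ofPred_eq, Set.mem_Iic] at hr ⊢
    lia
  have exponent_eq : ∀ r : ℕ, (r : ℤ) - ((r - z r).toNat : ℕ) = z r := fun r => by
    have := two_mul_z_le r
    lia
  simp only [inv_prod_mul_boltz_eq a ha, exponent_eq]
  rw [← hc_iff, ← Equiv.intEquivNat.symm.summable_iff]
  have exp_zpow_pos : ∀ r, 0 < Real.exp β ^ z r := fun r => zpow_pos (Real.exp_pos β) _
  have approx_nonneg : ∀ r, 0 ≤ N r / (∏ i ∈ Finset.range r, (a i : ℝ)) * Real.exp β ^ z r :=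
    fun r => by positivity
  constructor
  · intro hfin
    have approx_summable := ENNReal.summable_toReal hfin
    simp only [ENNReal.toReal_ofReal (approx_nonneg _)] at approx_summable
    exact approx_summable.of_nonneg_of_le (fun r => mul_nonneg (hc _) (exp_zpow_pos r).le)
      fun r => mul_le_mul_of_nonneg_right (happrox r).1 (exp_zpow_pos r).le
  · intro hsum
    refine ((hsum.mul_left 2).of_nonneg_of_le approx_nonneg fun r => ?_).tsum_ofReal_ne_top
    rw [Function.comp_apply, ← mul_assoc]
    exact mul_le_mul_of_nonneg_right (happrox r).2 (exp_zpow_pos r).le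

end Boltzmann

/-- Combinatorial data for a graph made of one ray of vertices for each `j : J`: there are
`mult j k` edges from the `k`-th to the `(k + 1)`-st vertex of the `j`-th ray, and the `r`-th vertex
of the `j`-th ray is entered from the vertex number `level j r` of the ray `base` through
`entry j r` edges. -/
structure RayData (J : Type*) where
  base : J
  mult : J → ℕ → ℕ
  entry : J → ℕ → ℕ
  level : J → ℕ → ℕ
  mult_ne_zero : ∀ j k, mult j k ≠ 0
  mult_base : ∀ k, mult base k = 1
  entry_base : ∀ r, entry base r = 0
  entry_zero_ne_zero : ∀ j ≠ base, entry j 0 ≠ 0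
  finite_level_le : ∀ m, {x : J × ℕ | level x.1 x.2 ≤ m}.Finite

namespace RayData

/-- `inl (j, k)` is the `k`-th vertex of the `j`-th ray, and `inr n` is the vertex at distance
`n + 1` from the root on a common return ray, which is travelled towards the root. -/
abbrev Vertex (J : Type*) := (J × ℕ) ⊕ ℕ

variable {J : Type*} (R : RayData J)

/-- The initial vertex of the ray `R.base`. -/
abbrev root : Vertex J := .inl (R.base, 0)

/-- The adjacency matrix of the graph of `R`, where moreover the ray vertex `x` is joined to
`inr (delay x)`, and the `k`-th vertex of the ray `R.base` is joined to the root by `loops k`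
edges. -/
noncomputable def adj (loops : ℕ → ℕ) (delay : J × ℕ → ℕ) : Vertex J → Vertex J → ℕ
  | .inl x, .inl y => (if y = (x.1, x.2 + 1) then R.mult x.1 x.2 else 0) +
      (if x = (R.base, R.level y.1 y.2) then R.entry y.1 y.2 else 0) +
      (if x.1 = R.base ∧ y = (R.base, 0) then loops x.2 else 0)
  | .inl x, .inr n => if n = delay x then 1 else 0
  | .inr n, .inl y => if n = 0 ∧ y = (R.base, 0) then 1 else 0
  | .inr m, .inr n => if m = n + 1 then 1 else 0

section Columns

variable (loops : ℕ → ℕ) (delay : J × ℕ → ℕ) (φ : Vertex J → ℝ≥0∞)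

theorem tsum_mul_adj_inl_succ (j : J) (k : ℕ) :
    ∑' v, φ v * R.adj loops delay v (.inl (j, k + 1)) =
      φ (.inl (j, k)) * R.mult j k +
        φ (.inl (R.base, R.level j (k + 1))) * R.entry j (k + 1) := by
  have step_iff : ∀ x : J × ℕ, (j, k + 1) = (x.1, x.2 + 1) ↔ x = (j, k) := by
    simp [Prod.ext_iff, eq_comm]
  rw [ENNReal.summable.tsum_sum ENNReal.summable]
  simp [adj, step_iff, mul_add, ENNReal.tsum_add]

theorem tsum_mul_adj_inl_zero {j : J} (hj : j ≠ R.base) :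
    ∑' v, φ v * R.adj loops delay v (.inl (j, 0)) =
      φ (.inl (R.base, R.level j 0)) * R.entry j 0 := by
  rw [ENNReal.summable.tsum_sum ENNReal.summable]
  simp [adj, hj]

theorem tsum_mul_adj_root :
    ∑' v, φ v * R.adj loops delay v R.root =
      ∑' k, φ (.inl (R.base, k)) * loops k + φ (.inr 0) := by
  rw [ENNReal.summable.tsum_sum ENNReal.summable]
  congr 1
  · rw [ENNReal.tsum_prod', tsum_eq_single R.base fun j hj => by simp [adj, hj]]
    simp [adj, R.entry_base]
  · simp [adj]

theorem tsum_mul_adj_inr (n : ℕ) :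
    ∑' v, φ v * R.adj loops delay v (.inr n) =
      (∑' x, if n = delay x then φ (.inl x) else 0) + φ (.inr (n + 1)) := by
  rw [ENNReal.summable.tsum_sum ENNReal.summable]
  simp [adj]

end Columns

section Weights

variable (q : ℝ≥0∞)

/-- The weight of the first `k` steps of the `j`-th ray. -/
noncomputable def rayProd (j : J) (k : ℕ) : ℝ≥0∞ := ∏ i ∈ Finset.range k, (R.mult j i * q)

/-- The weight with which paths from the root enter the `j`-th ray at its `r`-th vertex. -/
noncomputable def entryWeight (j : J) (r : ℕ) : ℝ≥0∞ :=
  (if (j, r) = (R.base, 0) then 1 else 0) + R.entry j r * q ^ (R.level j r + 1)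

/-- The total weight of the paths from the root to the `k`-th vertex of the `j`-th ray that do not
return to the root. -/
noncomputable def rayWeight (j : J) : ℕ → ℝ≥0∞
  | 0 => R.entryWeight q j 0
  | k + 1 => rayWeight j k * (R.mult j k * q) + R.entryWeight q j (k + 1)

/-- The limit along the `j`-th ray of the first-passage weight normalized by `rayProd`. -/
noncomputable def entrySeries (j : J) : ℝ≥0∞ :=
  ∑' r, (R.rayProd q j r)⁻¹ * R.entryWeight q j r

theorem entryWeight_base (r : ℕ) : R.entryWeight q R.base r = if r = 0 then 1 else 0 := by
  simp [entryWeight, R.entry_base]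

theorem rayWeight_base (k : ℕ) : R.rayWeight q R.base k = q ^ k := by
  induction k with
  | zero => simp [rayWeight, entryWeight_base]
  | succ k ih => simp [rayWeight, entryWeight_base, ih, R.mult_base, pow_succ]

theorem entrySeries_base : R.entrySeries q R.base = 1 := by
  rw [entrySeries, tsum_eq_single 0 fun r hr => by simp [entryWeight_base, hr]]
  simp [rayProd, entryWeight_base]

theorem entrySeries_of_ne {j : J} (hj : j ≠ R.base) :
    R.entrySeries q j = q * ∑' r, (R.rayProd q j r)⁻¹ * (R.entry j r * q ^ R.level j r) := by
  rw [entrySeries, ← ENNReal.tsum_mul_left]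
  refine tsum_congr fun r => ?_
  simp only [entryWeight, Prod.mk.injEq, hj, false_and, if_false, zero_add, pow_succ]
  ring

variable {q}

theorem entryWeight_zero_ne_zero (hq : q ≠ 0) (j : J) : R.entryWeight q j 0 ≠ 0 := by
  obtain rfl | hj := eq_or_ne j R.base
  · simp [entryWeight_base]
  · simp [entryWeight, R.entry_zero_ne_zero j hj, hq]

theorem entrySeries_ne_zero (hq : q ≠ 0) (j : J) : R.entrySeries q j ≠ 0 := fun hzero =>
  R.entryWeight_zero_ne_zero hq j (by simpa [rayProd] using ENNReal.tsum_eq_zero.1 hzero 0)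

theorem rayWeight_ne_top (hq : q ≠ ⊤) (j : J) (k : ℕ) : R.rayWeight q j k ≠ ⊤ := by
  have entryWeight_ne_top : ∀ r, R.entryWeight q j r ≠ ⊤ := fun r => by
    have := ENNReal.mul_ne_top (ENNReal.natCast_ne_top (R.entry j r))
      (ENNReal.pow_ne_top (n := R.level j r + 1) hq)
    rw [entryWeight]
    split_ifs <;> simpa
  induction k with
  | zero => exact entryWeight_ne_top 0
  | succ k ih =>
    exact ENNReal.add_ne_top.2 ⟨ENNReal.mul_ne_top ih
      (ENNReal.mul_ne_top (ENNReal.natCast_ne_top _) hq), entryWeight_ne_top _⟩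

theorem inv_rayProd_mul_rayWeight (hq₀ : q ≠ 0) (hq : q ≠ ⊤) (j : J) (k : ℕ) :
    (R.rayProd q j k)⁻¹ * R.rayWeight q j k =
      ∑ r ∈ Finset.range (k + 1), (R.rayProd q j r)⁻¹ * R.entryWeight q j r := by
  induction k with
  | zero => simp [rayWeight]
  | succ k ih =>
    have step_ne_zero : (R.mult j k : ℝ≥0∞) * q ≠ 0 := by simp [R.mult_ne_zero, hq₀]
    have step_ne_top : (R.mult j k : ℝ≥0∞) * q ≠ ⊤ :=
      ENNReal.mul_ne_top (ENNReal.natCast_ne_top _) hq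
    have rayProd_succ : (R.rayProd q j (k + 1))⁻¹ * (R.mult j k * q) = (R.rayProd q j k)⁻¹ := by
      rw [rayProd, Finset.prod_range_succ, ENNReal.mul_inv (.inr step_ne_top) (.inr step_ne_zero),
        mul_assoc, ENNReal.inv_mul_cancel step_ne_zero step_ne_top, mul_one]
      rfl
    rw [Finset.sum_range_succ, ← ih, rayWeight, mul_add, ← rayProd_succ]
    ring

end Weights

section FirstPassage

open InfMatrix

variable (loops : ℕ → ℕ) (delay : J × ℕ → ℕ) (q : ℝ≥0∞)

theorem firstPassage_base (k : ℕ) :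
    (scaled (R.adj loops delay) q).firstPassage R.root (.inl (R.base, k)) = q ^ k := by
  induction k with
  | zero => rw [firstPassage_self, pow_zero]
  | succ k ih =>
    rw [firstPassage_of_ne _ (by simp), tsum_mul_scaled, tsum_mul_adj_inl_succ, ih,
      R.mult_base, R.entry_base]
    simp [pow_succ]

theorem firstPassage_ray (j : J) (k : ℕ) :
    (scaled (R.adj loops delay) q).firstPassage R.root (.inl (j, k)) = R.rayWeight q j k := by
  obtain rfl | hj := eq_or_ne j R.base
  · rw [firstPassage_base, rayWeight_base]
  induction k with
  | zero =>
    rw [firstPassage_of_ne _ (by simp [hj]), tsum_mul_scaled, R.tsum_mul_adj_inl_zero _ _ _ hj,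
      firstPassage_base]
    simp only [rayWeight, entryWeight, Prod.mk.injEq, hj, false_and, if_false, zero_add, pow_succ]
    ring
  | succ k ih =>
    rw [firstPassage_of_ne _ (by simp), tsum_mul_scaled, tsum_mul_adj_inl_succ, ih,
      firstPassage_base]
    simp only [rayWeight, entryWeight, Prod.mk.injEq, and_false, if_false, zero_add, pow_succ,
      Nat.add_eq_zero_iff, one_ne_zero]
    ring

theorem returnWeight_root :
    (scaled (R.adj loops delay) q).returnWeight R.root =
      ∑' k, loops k * q ^ (k + 1) +
        (scaled (R.adj loops delay) q).firstPassage R.root (.inr 0) * q := by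
  rw [returnWeight, tsum_mul_scaled, tsum_mul_adj_root, add_mul, ← ENNReal.tsum_mul_right]
  simp only [firstPassage_base]
  congr 2 with k
  ring

theorem firstPassage_adj_congr (loops' : ℕ → ℕ) :
    (scaled (R.adj loops delay) q).firstPassage R.root =
      (scaled (R.adj loops' delay) q).firstPassage R.root := by
  have taboo_eq : (scaled (R.adj loops delay) q).taboo R.root =
      (scaled (R.adj loops' delay) q).taboo R.root := by
    ext v w
    by_cases hw : w = R.root
    · simp [taboo, hw]
    · rcases v with x | m <;> rcases w with y | n <;> simp_all [taboo, scaled, adj]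
  ext w
  rw [firstPassage, firstPassage, taboo_eq]

/-- A majorant of the first-passage weights from the root: a path that leaves the ray vertex `x` for
the return ray reaches `inr n` after `delay x + 1 - n` steps. -/
noncomputable def passageBound : Vertex J → ℝ≥0∞
  | .inl x => R.rayWeight q x.1 x.2
  | .inr n => ∑' x : J × ℕ,
      if n ≤ delay x then R.rayWeight q x.1 x.2 * q ^ (delay x + 1 - n) else 0

theorem tsum_passageBound_mul_scaled_le {w : Vertex J} (hw : w ≠ R.root) :
    ∑' v, R.passageBound delay q v * scaled (R.adj loops delay) q v w ≤
      R.passageBound delay q w := by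
  rw [tsum_mul_scaled]
  rcases w with ⟨j, _ | k⟩ | n
  · have hj : j ≠ R.base := fun hj => hw (by rw [hj])
    rw [R.tsum_mul_adj_inl_zero _ _ _ hj]
    simp only [passageBound, rayWeight_base, rayWeight, entryWeight, Prod.mk.injEq, hj, false_and,
      if_false, zero_add, pow_succ]
    exact le_of_eq (by ring)
  · rw [tsum_mul_adj_inl_succ]
    simp only [passageBound, rayWeight_base, rayWeight, entryWeight, Prod.mk.injEq, and_false,
      if_false, zero_add, pow_succ, Nat.add_eq_zero_iff, one_ne_zero]
    exact le_of_eq (by ring)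
  · rw [tsum_mul_adj_inr]
    simp only [passageBound]
    rw [← ENNReal.tsum_add, ← ENNReal.tsum_mul_right]
    refine ENNReal.tsum_le_tsum fun x => ?_
    obtain hlt | rfl | hgt := lt_trichotomy n (delay x)
    · rw [if_neg hlt.ne, if_pos (Nat.succ_le_of_lt hlt), if_pos hlt.le, zero_add, mul_assoc,
        ← pow_succ, show delay x + 1 - (n + 1) + 1 = delay x + 1 - n by lia]
    · simp
    · simp [hgt.ne', hgt.not_ge, (Nat.lt_succ_of_lt hgt).not_ge]

theorem firstPassage_inr_zero_mul_le :
    (scaled (R.adj loops delay) q).firstPassage R.root (.inr 0) * q ≤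
      ∑' x : J × ℕ, R.rayWeight q x.1 x.2 * q ^ 2 * q ^ delay x := by
  have firstPassage_le := mul_firstPassage_le (ε := 1) (φ := R.passageBound delay q)
    (by simp [passageBound, rayWeight_base])
    (fun w hw => R.tsum_passageBound_mul_scaled_le loops delay q hw) (.inr 0)
  calc _ ≤ R.passageBound delay q (.inr 0) * q := by
        gcongr
        rwa [one_mul] at firstPassage_le
    _ = _ := by
      simp only [passageBound, ← ENNReal.tsum_mul_right, Nat.zero_le, if_true, Nat.sub_zero]
      refine tsum_congr fun x => ?_
      ring

theorem exists_returnWeight_eq_one [Countable J] {q : ℝ≥0∞} (hq₀ : q ≠ 0) (hq : q < 1) :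
    ∃ loops delay, (∀ x, x.2 ≤ delay x) ∧
      (scaled (R.adj loops delay) q).returnWeight R.root = 1 := by
  obtain ⟨delay, le_delay, tsum_lt⟩ := exists_tsum_mul_pow_lt
    (f := fun x : J × ℕ => R.rayWeight q x.1 x.2 * q ^ 2)
    (fun x => ENNReal.mul_ne_top (R.rayWeight_ne_top hq.ne_top x.1 x.2)
      (ENNReal.pow_ne_top hq.ne_top)) hq one_ne_zero Prod.snd
  set y := (scaled (R.adj 0 delay) q).firstPassage R.root (.inr 0) * q
  have hy : y ≤ 1 := ((R.firstPassage_inr_zero_mul_le 0 delay q).trans_lt tsum_lt).le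
  lift q to ℝ≥0 using hq.ne_top
  have pow_tendsto : Tendsto (fun k => q ^ (k + 1)) atTop (nhds 0) :=
    (tendsto_add_atTop_iff_nat 1).2
      (tendsto_pow_atTop_nhds_zero_of_lt_one zero_le (by simpa using hq))
  obtain ⟨loops, hloops⟩ := exists_nat_tsum_mul_eq
    (fun k => pow_ne_zero (k + 1) (by simpa using hq₀)) pow_tendsto (1 - y).toNNReal
  refine ⟨loops, delay, le_delay, ?_⟩
  rw [ENNReal.coe_toNNReal (by finiteness)] at hloops
  rw [returnWeight_root, R.firstPassage_adj_congr _ _ _ 0, ← tsub_add_cancel_of_le hy, ← hloops]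
  simp [y]

end FirstPassage

section ExitSup

open InfMatrix

variable (loops : ℕ → ℕ) (delay : J × ℕ → ℕ)

theorem adj_ray (j : J) (k : ℕ) :
    R.adj loops delay (.inl (j, k)) (.inl (j, k + 1)) = R.mult j k := by
  have no_entry : (j, k) = (R.base, R.level j (k + 1)) → R.entry j (k + 1) = 0 := fun heq => by
    rw [(Prod.mk.inj heq).1, R.entry_base]
  simpa [adj] using no_entry

variable {q : ℝ≥0∞}

theorem exitSup_ray (hq₀ : q ≠ 0) (hq : q ≠ ⊤) (j : J) :
    (scaled (R.adj loops delay) q).exitSup R.root (fun k => .inl (j, k)) =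
      (scaled (R.adj loops delay) q).green R.root R.root * R.entrySeries q j := by
  have term_eq : ∀ k, ((scaled (R.adj loops delay) q).pathWeight (fun k => .inl (j, k)) k)⁻¹ *
      (scaled (R.adj loops delay) q).green R.root (.inl (j, k)) =
      (scaled (R.adj loops delay) q).green R.root R.root *
        ∑ r ∈ Finset.range (k + 1), (R.rayProd q j r)⁻¹ * R.entryWeight q j r := fun k => by
    rw [green_eq_mul_firstPassage, firstPassage_ray, ← R.inv_rayProd_mul_rayWeight hq₀ hq,
      mul_left_comm]
    simp only [pathWeight, scaled, adj_ray, rayProd]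
  simp only [exitSup, term_eq]
  rw [← ENNReal.mul_iSup, entrySeries, ENNReal.tsum_eq_iSup_nat' (tendsto_add_atTop_nat 1)]

theorem exitSup_ray_ne_top_iff (hq₀ : q ≠ 0) (hq : q ≠ ⊤) (j : J) :
    (scaled (R.adj loops delay) q).exitSup R.root (fun k => .inl (j, k)) ≠ ⊤ ↔
      (scaled (R.adj loops delay) q).green R.root R.root ≠ ⊤ ∧ R.entrySeries q j ≠ ⊤ := by
  have green_ne_zero : (scaled (R.adj loops delay) q).green R.root R.root ≠ 0 := by
    simp [green_self_eq_one_add]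
  rw [R.exitSup_ray loops delay hq₀ hq, Ne, ENNReal.mul_eq_top]
  simp only [green_ne_zero, R.entrySeries_ne_zero hq₀, ne_eq, not_false_eq_true, true_and, and_true,
    not_or]
  exact and_comm

end ExitSup

section Combinatorics

variable {R} {loops : ℕ → ℕ} {delay : J × ℕ → ℕ}

theorem adj_inl_inl_cases {x y : J × ℕ} (hxy : R.adj loops delay (.inl x) (.inl y) ≠ 0) :
    y = (x.1, x.2 + 1) ∨ (x = (R.base, R.level y.1 y.2) ∧ y.1 ≠ R.base) ∨ y = (R.base, 0) := by
  by_contra! hne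
  obtain ⟨hstep, hentry, hroot⟩ := hne
  refine hxy ?_
  simp only [adj, hstep, hroot, and_false, if_false, add_zero, zero_add]
  split_ifs with hx
  · rw [hentry hx, R.entry_base]
  · rfl

theorem finite_adj_ne_zero (v : Vertex J) : {w | R.adj loops delay v w ≠ 0}.Finite := by
  rcases v with x | n
  · refine ((((R.finite_level_le x.2).insert (x.1, x.2 + 1)).insert (R.base, 0)).image
      Sum.inl |>.insert (.inr (delay x))).subset fun w hw => ?_
    rcases w with y | m
    · refine .inr ⟨y, ?_, rfl⟩
      obtain hstep | ⟨hentry, -⟩ | hroot := adj_inl_inl_cases hw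
      · exact .inr (.inl hstep)
      · exact .inr (.inr (by simp [hentry]))
      · exact .inl hroot
    · exact .inl (by simpa [adj] using hw)
  · refine (Set.toFinite {R.root, .inr (n - 1)}).subset fun w hw => ?_
    rcases w with y | m
    · simp_all [adj]
    · simp_all [adj]

theorem reaches_adj_root_inl (x : J × ℕ) : Reaches (R.adj loops delay) R.root (.inl x) := by
  have along_ray : ∀ j k, Reaches (R.adj loops delay) (.inl (j, 0)) (.inl (j, k)) := fun j k => by
    induction k with
    | zero => rfl
    | succ k ih => exact ih.tail (by rw [adj_ray]; exact R.mult_ne_zero j k)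
  obtain ⟨j, k⟩ := x
  obtain rfl | hj := eq_or_ne j R.base
  · exact along_ray R.base k
  · refine ((along_ray R.base (R.level j 0)).tail ?_).trans (along_ray j k)
    simp [adj, R.entry_zero_ne_zero j hj]

theorem reaches_adj_inl_inr (x : J × ℕ) :
    Reaches (R.adj loops delay) (.inl x) (.inr (delay x)) :=
  .single (by simp [adj])

theorem reaches_adj_inr_inr {m n : ℕ} (hmn : m ≤ n) :
    Reaches (R.adj loops delay) (.inr n) (.inr m) := by
  induction n, hmn using Nat.le_induction with
  | base => rfl
  | succ n _ ih => exact ih.head (by simp [adj])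

theorem reaches_adj_inr_root (n : ℕ) : Reaches (R.adj loops delay) (.inr n) R.root :=
  (reaches_adj_inr_inr n.zero_le).tail (by simp [adj])

theorem reaches_adj (hdelay : ∀ x, x.2 ≤ delay x) (u w : Vertex J) :
    Reaches (R.adj loops delay) u w := by
  have to_root : Reaches (R.adj loops delay) u R.root := by
    rcases u with x | n
    · exact (reaches_adj_inl_inr x).trans (reaches_adj_inr_root _)
    · exact reaches_adj_inr_root n
  refine to_root.trans ?_
  rcases w with x | n
  · exact reaches_adj_root_inl x
  · exact (reaches_adj_root_inl (R.base, n)).trans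
      ((reaches_adj_inl_inr _).trans (reaches_adj_inr_inr (hdelay (R.base, n))))

theorem ne_inr_of_forall_ne_root {t : ℕ → Vertex J} {N : ℕ}
    (hstep : ∀ i, R.adj loops delay (t i) (t (i + 1)) ≠ 0) (hroot : ∀ i, N ≤ i → t i ≠ R.root)
    (n i : ℕ) (hi : N ≤ i) : t i ≠ .inr n := by
  intro ht
  have hnext := hstep i
  have hnext_root := hroot (i + 1) (by lia)
  induction n generalizing i with
  | zero => rcases hs : t (i + 1) with y | m <;> simp_all [adj]
  | succ n ih =>
    refine ih (i + 1) (by lia) ?_ (hstep _) (hroot _ (by lia))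
    rcases hs : t (i + 1) with y | m <;> simp_all [adj]

theorem exists_eventually_eq_of_step_cases {b : J} {x : ℕ → J × ℕ}
    (hx : ∀ i, x (i + 1) = ((x i).1, (x i).2 + 1) ∨ ((x i).1 = b ∧ (x (i + 1)).1 ≠ b)) :
    ∃ j N k, ∀ i, x (N + i) = (j, k + i) := by
  -- A step of the second kind leaves `b` for good, so there is at most one.
  obtain ⟨N, hN⟩ : ∃ N, ∀ i, x (N + i + 1) = ((x (N + i)).1, (x (N + i)).2 + 1) := by
    by_cases hb : ∀ i, (x i).1 = b
    · exact ⟨0, fun i => (hx _).resolve_right fun h => h.2 (hb _)⟩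
    · push Not at hb
      obtain ⟨N, hN⟩ := hb
      have stays_off : ∀ i, (x (N + i)).1 ≠ b := fun i => by
        induction i with
        | zero => exact hN
        | succ i ih =>
          obtain h | h := hx (N + i)
          · rwa [← add_assoc, h]
          · exact h.2
      exact ⟨N, fun i => (hx _).resolve_right fun h => stays_off i h.1⟩
  refine ⟨(x N).1, N, (x N).2, fun i => ?_⟩
  induction i with
  | zero => rfl
  | succ i ih => rw [← add_assoc, hN, ih, add_assoc]

theorem exists_eventually_eq_ray {t : ℕ → Vertex J}
    (hstep : ∀ i, R.adj loops delay (t i) (t (i + 1)) ≠ 0)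
    (hleave : ∀ M : Set (Vertex J), M.Finite → ∃ N, ∀ i, N ≤ i → t i ∉ M) :
    ∃ j N k, ∀ i, t (N + i) = .inl (j, k + i) := by
  obtain ⟨N, hN⟩ := hleave {R.root} (Set.finite_singleton _)
  have exists_inl : ∀ i, ∃ x, t (N + i) = .inl x := fun i => by
    rcases hs : t (N + i) with x | n
    · exact ⟨x, rfl⟩
    · exact absurd hs (ne_inr_of_forall_ne_root hstep hN n _ (by lia))
  choose x hx using exists_inl
  obtain ⟨j, M, k, hray⟩ := exists_eventually_eq_of_step_cases (b := R.base) (x := x) fun i => by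
    have hadj := hstep (N + i)
    rw [add_assoc, hx, hx] at hadj
    obtain hray | ⟨hentry, hne⟩ | hroot := adj_inl_inl_cases hadj
    · exact .inl hray
    · exact .inr ⟨by rw [hentry], hne⟩
    · exact absurd (by rw [hx, hroot]; rfl) (hN (N + (i + 1)) (by lia))
  exact ⟨j, N + M, k, fun i => by rw [add_assoc, hx, hray]⟩

end Combinatorics

section Existence

theorem exists_entrySeries_ne_top_iff [Countable J] (I : J → Set ℝ)
    (hI : ∀ j, (I j).OrdConnected) (j₀ : J) :
    ∃ R : RayData J, R.base = j₀ ∧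
      ∀ j ≠ j₀, ∀ β, R.entrySeries (boltz β) j ≠ ⊤ ↔ β ∈ I j := by
  choose a N s ha hN hs hseries using fun j => exists_boltz_series_ne_top_iff (hI j)
  obtain ⟨enc, enc_injective⟩ := exists_injective_nat J
  let R : RayData J :=
    { base := j₀
      mult := fun j k => if j = j₀ then 1 else a j k
      entry := fun j r => if j = j₀ then 0 else N j r
      level := fun j r => enc j + s j r
      mult_ne_zero := fun j k => by split_ifs <;> simp [ha]
      mult_base := fun k => if_pos rfl
      entry_base := fun r => if_pos rfl
      entry_zero_ne_zero := fun j hj => by simpa [hj] using hN j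
      finite_level_le := fun m => by
        have finite_rays : {j | enc j ≤ m}.Finite :=
          (Set.finite_Iic m).preimage enc_injective.injOn
        refine (finite_rays.biUnion fun j _ => ((hs j m).image (Prod.mk j))).subset
          fun x (hx : enc x.1 + s x.1 x.2 ≤ m) => ?_
        exact Set.mem_biUnion (show enc x.1 ≤ m by lia) ⟨x.2, show s x.1 x.2 ≤ m by lia, rfl⟩ }
  refine ⟨R, rfl, fun j hj β => ?_⟩
  have factor : R.entrySeries (boltz β) j = boltz β ^ (enc j + 1) *
      ∑' r, (∏ i ∈ Finset.range r, (a j i * boltz β))⁻¹ * (N j r * boltz β ^ s j r) := by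
    rw [R.entrySeries_of_ne _ hj, pow_succ', mul_assoc]
    congr 1
    rw [← ENNReal.tsum_mul_left]
    refine tsum_congr fun r => ?_
    simp only [R, rayProd, hj, if_false, pow_add]
    ring
  rw [← hseries j β, factor, Ne, ENNReal.mul_eq_top]
  simp [boltz_ne_zero, boltz_ne_top]

end Existence

end RayData

namespace DirGraph

open InfMatrix

theorem Apow_eq_power (G : DirGraph) (F : G.E → ℝ) (β : ℝ) (n : ℕ) :
    G.Apow F β n = power (G.Amat F β) n := by
  induction n with
  | zero => rfl
  | succ n ih => ext u w; simp only [Apow, power, ih]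

theorem tailEquiv_iff {G : DirGraph} {t t' : ℕ → G.V} :
    G.TailEquiv t t' ↔ ∃ M N, ∀ i, t (M + i) = t' (N + i) := by
  constructor
  · rintro ⟨k, N, heq⟩
    refine ⟨(N + k).toNat, N, fun i => ?_⟩
    have := (heq N le_rfl).1
    rw [← (heq (N + i) (by lia)).2]
    congr 1
    lia
  · rintro ⟨M, N, heq⟩
    refine ⟨M - N, N, fun i hi => ⟨by lia, ?_⟩⟩
    rw [show ((i : ℤ) + (M - N)).toNat = M + (i - N) by lia, heq, Nat.add_sub_cancel' hi]

theorem IsPathFrom.cons {G : DirGraph} {μ : List G.E} {e : G.E} {w : G.V}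
    (hμ : G.IsPathFrom μ (G.r e) w) : G.IsPathFrom (e :: μ) (G.s e) w := by
  obtain ⟨hchain, hhead, hlast, hnil⟩ := hμ
  refine ⟨List.isChain_cons.2 ⟨fun f hf => (hhead f hf).symm, hchain⟩, by simp, ?_, by simp⟩
  rcases μ with _ | ⟨f, μ⟩
  · simpa using hnil rfl
  · simpa using hlast

theorem exists_isPathFrom_of_reflTransGen {G : DirGraph} {u w : G.V}
    (huw : Relation.ReflTransGen (fun u w => ∃ e, G.s e = u ∧ G.r e = w) u w) :
    ∃ μ, G.IsPathFrom μ u w := by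
  induction huw using Relation.ReflTransGen.head_induction_on with
  | refl => exact ⟨[], List.IsChain.nil, by simp, by simp, fun _ => rfl⟩
  | head hstep _ ih =>
    obtain ⟨μ, hμ⟩ := ih
    obtain ⟨e, rfl, rfl⟩ := hstep
    exact ⟨e :: μ, hμ.cons⟩

section OfAdj

variable {V : Type} [Countable V] (A : V → V → ℕ)

/-- The directed graph with adjacency matrix `A`. -/
abbrev ofAdj : DirGraph where
  V := V
  E := Σ p : V × V, Fin (A p.1 p.2)
  countV := inferInstance
  countE := inferInstance
  s := fun e => e.1.1
  r := fun e => e.1.2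

/-- The edges of `ofAdj A` from `u` to `w`, numbered. -/
def edgeEquiv (u w : V) :
    {e : (ofAdj A).E // (ofAdj A).s e = u ∧ (ofAdj A).r e = w} ≃ Fin (A u w) where
  toFun := fun ⟨⟨_, i⟩, hs, hr⟩ => i.cast (by rw [← hs, ← hr])
  invFun := fun i => ⟨⟨(u, w), i⟩, rfl, rfl⟩
  left_inv := by rintro ⟨⟨⟨u, w⟩, i⟩, rfl, rfl⟩; rfl
  right_inv := fun _ => rfl

variable {A}

theorem exists_edge_ofAdj_iff {u w : V} :
    (∃ e, (ofAdj A).s e = u ∧ (ofAdj A).r e = w) ↔ A u w ≠ 0 := by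
  rw [← nonempty_subtype, (edgeEquiv A u w).nonempty_congr, ← Fin.pos_iff_nonempty,
    Nat.pos_iff_ne_zero]

theorem stronglyConnected_ofAdj
    (hA : ∀ u w, Reaches A u w) :
    (ofAdj A).StronglyConnected := fun u w =>
  exists_isPathFrom_of_reflTransGen
    (Relation.ReflTransGen.mono (fun _ _ => exists_edge_ofAdj_iff.2) _ _ (hA u w))

theorem rowFinite_ofAdj (hA : ∀ u, {w | A u w ≠ 0}.Finite) : (ofAdj A).RowFinite := fun v => by
  refine ((hA v).biUnion fun w _ => Set.finite_range
    fun i : Fin (A v w) => (⟨(v, w), i⟩ : (ofAdj A).E)).subset ?_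
  rintro ⟨⟨_, w⟩, i⟩ rfl
  exact Set.mem_biUnion (exists_edge_ofAdj_iff.1 ⟨⟨(_, w), i⟩, rfl, rfl⟩) ⟨i, rfl⟩

theorem Amat_ofAdj_const (c β : ℝ) :
    (ofAdj A).Amat (fun _ => c) β = scaled A (ENNReal.ofReal (Real.exp (-β * c))) := by
  ext u w
  rw [Amat, ENNReal.tsum_const, ENat.card_congr (edgeEquiv A u w)]
  simp [scaled]

theorem Amat_ofAdj_one (β : ℝ) : (ofAdj A).Amat (fun _ => 1) β = scaled A (boltz β) := by
  rw [Amat_ofAdj_const, mul_one, boltz]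

theorem tsum_Apow_ofAdj_one (β : ℝ) (u w : V) :
    ∑' n, (ofAdj A).Apow (fun _ => 1) β n u w = green (scaled A (boltz β)) u w := by
  simp only [Apow_eq_power, Amat_ofAdj_one, green]

theorem limsup_Apow_ofAdj_zero {h : ℝ} {o : V}
    (hA : ∀ u w, Reaches A u w)
    (hreturn : (scaled A (boltz h)).returnWeight o = 1) (v : V) :
    limsup (fun n : ℕ => (ofAdj A).Apow (fun _ => 0) 0 n v v ^ (n : ℝ)⁻¹) atTop =
      ENNReal.ofReal (Real.exp h) := by
  simp only [Apow_eq_power, Amat_ofAdj_const, mul_zero, Real.exp_zero, ENNReal.ofReal_one]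
  rw [limsup_power_scaled_one hA (boltz_ne_zero h) hreturn, boltz,
    ← ENNReal.ofReal_inv_of_pos (Real.exp_pos _), Real.exp_neg, inv_inv]

theorem IsExitPath.adj_ne_zero {t : ℕ → V} (ht : (ofAdj A).IsExitPath t) (i : ℕ) :
    A (t i) (t (i + 1)) ≠ 0 :=
  exists_edge_ofAdj_iff.1 (ht.1 i)

theorem IsExitPath.exit_condition_iff {t : ℕ → V} (ht : (ofAdj A).IsExitPath t) (β : ℝ) :
    ((∑' n, (ofAdj A).Apow (fun _ => 1) β n (t 0) (t 0)) ≠ ⊤ ∧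
      (⨆ k : ℕ, (∏ i ∈ Finset.range (k + 1), (ofAdj A).Amat (fun _ => 1) β (t i) (t (i + 1)))⁻¹ *
        ∑' n, (ofAdj A).Apow (fun _ => 1) β n (t 0) (t (k + 1))) ≠ ⊤) ↔
      exitSup (scaled A (boltz β)) (t 0) t ≠ ⊤ := by
  rw [← iSup_succ_ne_top_iff_exitSup_ne_top
    (scaled_ne_zero (boltz_ne_zero β) <| ht.adj_ne_zero ·) fun i => scaled_ne_top (boltz_ne_top β)]
  simp only [tsum_Apow_ofAdj_one, Amat_ofAdj_one, pathWeight]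

end OfAdj

end DirGraph

namespace RayData

open DirGraph InfMatrix

variable {J : Type} [Countable J] {R : RayData J} {loops : ℕ → ℕ} {delay : J × ℕ → ℕ}

theorem isExitPath_ray (j : J) :
    (ofAdj (R.adj loops delay)).IsExitPath fun k => .inl (j, k) := by
  refine ⟨fun k => exists_edge_ofAdj_iff.2 ?_, fun M hM => ?_⟩
  · rw [adj_ray]
    exact R.mult_ne_zero j k
  · have ray_injective : (fun k => (.inl (j, k) : Vertex J)).Injective := fun k l hkl => by
      simpa using hkl
    refine eventually_atTop.1 ?_
    rw [← Nat.cofinite_eq_atTop]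
    exact (hM.preimage ray_injective.injOn).eventually_cofinite_notMem

theorem eq_of_tailEquiv_ray {j j' : J}
    (hjj' : (ofAdj (R.adj loops delay)).TailEquiv (fun k => .inl (j, k)) fun k => .inl (j', k)) :
    j = j' := by
  obtain ⟨M, N, heq⟩ := tailEquiv_iff.1 hjj'
  exact congrArg Prod.fst (Sum.inl_injective (heq 0))

theorem exists_tailEquiv_ray {t : ℕ → Vertex J}
    (ht : (ofAdj (R.adj loops delay)).IsExitPath t) :
    ∃ j, (ofAdj (R.adj loops delay)).TailEquiv (fun k => .inl (j, k)) t := by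
  obtain ⟨j, N, k, heq⟩ := exists_eventually_eq_ray ht.adj_ne_zero ht.2
  exact ⟨j, tailEquiv_iff.2 ⟨k, N, fun i => (heq i).symm⟩⟩

theorem exitSup_ne_top_iff_of_tailEquiv_ray (hdelay : ∀ x, x.2 ≤ delay x) {t : ℕ → Vertex J}
    (ht : (ofAdj (R.adj loops delay)).IsExitPath t) {j : J}
    (htail : (ofAdj (R.adj loops delay)).TailEquiv (fun k => .inl (j, k)) t) {q : ℝ≥0∞}
    (hq₀ : q ≠ 0) (hq : q ≠ ⊤) :
    exitSup (scaled (R.adj loops delay) q) (t 0) t ≠ ⊤ ↔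
      (scaled (R.adj loops delay) q).green R.root R.root ≠ ⊤ ∧ R.entrySeries q j ≠ ⊤ := by
  obtain ⟨M, N, heq⟩ := tailEquiv_iff.1 htail
  rw [← R.exitSup_ray_ne_top_iff loops delay hq₀ hq]
  exact (irreducible_scaled (reaches_adj hdelay) hq₀).exitSup_ne_top_iff_of_tail_eq
    (scaled_ne_zero hq₀ <| ht.adj_ne_zero ·) (fun _ => scaled_ne_top hq)
    (scaled_ne_zero hq₀ <| (isExitPath_ray j).adj_ne_zero ·) (fun _ => scaled_ne_top hq)
    (fun i => (heq i).symm) _ _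

end RayData

/-- realization of a prescribed family of intervals by a recurrent
row-finite strongly connected graph. -/
theorem stmt_1 (h : ℝ) (hpos : 0 < h) (J : Type) [Countable J] [Nonempty J]
    (I : J → Set ℝ) (hI : ∀ j : J, I j ⊆ Set.Ioi h ∧ (I j).OrdConnected)
    (hmax : ∃ j₀ : J, I j₀ = Set.Ioi h) :
    ∃ G : DirGraph, G.StronglyConnected ∧ G.RowFinite ∧ Infinite G.V ∧
      (∀ v : G.V,
        Filter.limsup (fun n : ℕ => (G.Apow (fun _ => 0) 0 n v v) ^ ((n : ℝ)⁻¹)) Filter.atTop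
          = ENNReal.ofReal (Real.exp h)) ∧
      (∀ v : G.V, ∑' n : ℕ, G.Apow (fun _ => 1) h n v v = ⊤) ∧
      ∃ τ : J → (ℕ → G.V),
        (∀ j : J, G.IsExitPath (τ j)) ∧
        (∀ j j' : J, G.TailEquiv (τ j) (τ j') → j = j') ∧
        (∀ t : ℕ → G.V, G.IsExitPath t → ∃ j : J, G.TailEquiv (τ j) t) ∧
        (∀ (β : ℝ) (j : J) (t : ℕ → G.V), G.IsExitPath t → G.TailEquiv (τ j) t →
          ((((∑' n : ℕ, G.Apow (fun _ => 1) β n (t 0) (t 0)) ≠ ⊤) ∧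
            (⨆ k : ℕ, (∏ i ∈ Finset.range (k + 1), G.Amat (fun _ => 1) β (t i) (t (i + 1)))⁻¹ *
                ∑' n : ℕ, G.Apow (fun _ => 1) β n (t 0) (t (k + 1))) ≠ ⊤) ↔ β ∈ I j)) := by
  obtain ⟨j₀, hj₀⟩ := hmax
  obtain ⟨R, rfl, hR⟩ := RayData.exists_entrySeries_ne_top_iff I (fun j => (hI j).2) j₀
  obtain ⟨loops, delay, hdelay, hreturn⟩ :=
    R.exists_returnWeight_eq_one (boltz_ne_zero h) (boltz_lt_one hpos)
  have connected := R.reaches_adj (loops := loops) hdelay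
  have green_eq_top_iff (β : ℝ) :=
    (InfMatrix.green_scaled_eq_top_iff hreturn (boltz β)).trans boltz_le_boltz_iff
  refine ⟨.ofAdj (R.adj loops delay), DirGraph.stronglyConnected_ofAdj connected,
    DirGraph.rowFinite_ofAdj RayData.finite_adj_ne_zero, inferInstance,
    DirGraph.limsup_Apow_ofAdj_zero connected hreturn, fun v => ?_,
    fun j k => .inl (j, k), RayData.isExitPath_ray, fun _ _ => RayData.eq_of_tailEquiv_ray,
    fun _ => RayData.exists_tailEquiv_ray, fun β j t ht htail => ?_⟩
  · rw [DirGraph.tsum_Apow_ofAdj_one]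
    exact (InfMatrix.irreducible_scaled connected (boltz_ne_zero h)).green_eq_top
      ((green_eq_top_iff h).2 le_rfl) v v
  · rw [ht.exit_condition_iff, RayData.exitSup_ne_top_iff_of_tailEquiv_ray hdelay ht htail
      (boltz_ne_zero β) (boltz_ne_top β), Ne, green_eq_top_iff, not_le]
    obtain rfl | hj := eq_or_ne j R.base
    · simp [RayData.entrySeries_base, hj₀]
    · rw [hR j hj]
      exact and_iff_right_of_imp fun hβ => (hI j).1 hβ
end

section
/- Let G be a cofinal countable directed graph whose set NW_G of non-wandering vertices is nonempty. Then: (i) NW_G is a hereditary subset of V; (ii) the subgraph with vertex set NW_G and edge set {e ∈ E : s(e) ∈ NW_G} is strongly connected; (iii) for every vertex v ∈ V there is N_v ∈ ℕ such that every finite path ν with s(ν) = v and length |ν| ≥ N_v satisfies r(ν) ∈ NW_G. -/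
open scoped ENNReal NNReal Classical
open Filter MeasureTheory

/-!
Call a vertex absorbed by `H` when all sufficiently long paths issuing from it end in `H`. If `H` is
nonempty and hereditary, the vertices absorbed by `H` form a nonempty hereditary and saturated set,
so by cofinality every vertex is absorbed by `H`. A non-wandering vertex is the end of arbitrarily
long loops based at itself, so it lies in every nonempty hereditary set, in particular among the
descendants of any vertex. This gives (ii), and also (i): for an edge `e` with `s e` non-wandering,
a path from `r e` to `s e` followed by `e` is a loop at `r e`. Now that `NW` is hereditary, (iii)
says that every vertex is absorbed by it.
-/

namespace DirGraph

variable {G : DirGraph} {H : Set G.V} {e : G.E} {μ ν : List G.E} {u v w : G.V}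

theorem isPath_iff_isChain : G.IsPath μ ↔ μ.IsChain (fun e f => G.r e = G.s f) := Iff.rfl

theorem isPathFrom_nil : G.IsPathFrom [] u w ↔ u = w := by
  simp [IsPathFrom, isPath_iff_isChain]

theorem isPathFrom_cons :
    G.IsPathFrom (e :: μ) u w ↔ G.s e = u ∧ G.IsPathFrom μ (G.r e) w := by
  cases μ with
  | nil => simp [IsPathFrom, isPath_iff_isChain]
  | cons f μ =>
    simp only [IsPathFrom, isPath_iff_isChain, List.isChain_cons_cons, List.head?_cons,
      List.getLast?_cons_cons, Option.mem_def, Option.some.injEq, forall_eq', reduceCtorEq,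
      false_imp_iff, and_true, eq_comm (a := G.r e)]
    tauto

theorem isPathFrom_singleton (e : G.E) : G.IsPathFrom [e] (G.s e) (G.r e) :=
  isPathFrom_cons.2 ⟨rfl, isPathFrom_nil.2 rfl⟩

theorem IsPathFrom.append (hμ : G.IsPathFrom μ u v) (hν : G.IsPathFrom ν v w) :
    G.IsPathFrom (μ ++ ν) u w := by
  induction μ generalizing u with
  | nil => rwa [List.nil_append, isPathFrom_nil.1 hμ]
  | cons e μ ih =>
    obtain ⟨he, htail⟩ := isPathFrom_cons.1 hμ
    exact isPathFrom_cons.2 ⟨he, ih htail⟩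

theorem exists_loop_le_length_of_mem_NW (hv : v ∈ G.NW) (n : ℕ) :
    ∃ μ, G.IsPathFrom μ v v ∧ n ≤ μ.length := by
  obtain ⟨loop, hne, hloop⟩ := hv
  induction n with
  | zero => exact ⟨[], isPathFrom_nil.2 rfl, le_rfl⟩
  | succ n ih =>
    obtain ⟨μ, hμ, hn⟩ := ih
    have hpos : 0 < loop.length := List.length_pos_iff.2 hne
    exact ⟨loop ++ μ, hloop.append hμ, by rw [List.length_append]; omega⟩

theorem Hereditary.range_mem (hH : G.Hereditary H) (hμ : G.IsPathFrom μ u w) (hu : u ∈ H) :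
    w ∈ H := by
  induction μ generalizing u with
  | nil => rwa [← isPathFrom_nil.1 hμ]
  | cons e μ ih =>
    obtain ⟨rfl, htail⟩ := isPathFrom_cons.1 hμ
    exact ih htail (hH e hu)

theorem Hereditary.source_mem (hH : G.Hereditary H) (hμ : G.IsPathFrom μ u w) (hu : u ∈ H) :
    ∀ e ∈ μ, G.s e ∈ H := by
  induction μ generalizing u with
  | nil => simp
  | cons e μ ih =>
    obtain ⟨rfl, htail⟩ := isPathFrom_cons.1 hμ
    exact List.forall_mem_cons.2 ⟨hu, ih htail (hH e hu)⟩

/-- The vertices reachable from `v` by a finite path, including `v` itself: the hereditary set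
generated by `v`. -/
def descendants (v : G.V) : Set G.V := {w | ∃ μ, G.IsPathFrom μ v w}

theorem self_mem_descendants (v : G.V) : v ∈ descendants v :=
  ⟨[], isPathFrom_nil.2 rfl⟩

theorem hereditary_descendants (v : G.V) : G.Hereditary (descendants v) :=
  fun e ⟨μ, hμ⟩ => ⟨μ ++ [e], hμ.append (isPathFrom_singleton e)⟩

/-- The vertices absorbed by `H`: those from which all sufficiently long finite paths end in `H`.
The bound on the length may depend on the vertex. -/
def absorbed (H : Set G.V) : Set G.V :=
  {v | ∃ N : ℕ, ∀ (μ : List G.E) (w : G.V), G.IsPathFrom μ v w → N ≤ μ.length → w ∈ H}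

theorem Hereditary.subset_absorbed (hH : G.Hereditary H) : H ⊆ absorbed H :=
  fun _ hv => ⟨0, fun _ _ hμ _ => hH.range_mem hμ hv⟩

theorem hereditary_absorbed (H : Set G.V) : G.Hereditary (absorbed H) := by
  rintro e ⟨N, hN⟩
  exact ⟨N, fun μ w hμ hlen =>
    hN (e :: μ) w (isPathFrom_cons.2 ⟨rfl, hμ⟩) (Nat.le_succ_of_le hlen)⟩

theorem saturated_absorbed (H : Set G.V) : G.Saturated (absorbed H) := by
  intro v _ hfin hsucc
  have eventually_bound : ∀ e ∈ {e | G.s e = v}, ∀ᶠ N in atTop,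
      ∀ μ w, G.IsPathFrom μ (G.r e) w → N ≤ μ.length → w ∈ H := by
    intro e he
    obtain ⟨N, hN⟩ := hsucc e he
    filter_upwards [eventually_ge_atTop N] with M hM μ w hμ hlen
    exact hN μ w hμ (hM.trans hlen)
  obtain ⟨N, hN⟩ := ((eventually_all_finite (Set.not_infinite.1 hfin)).2 eventually_bound).exists
  refine ⟨N + 1, fun μ w hμ hlen => ?_⟩
  cases μ with
  | nil => simp at hlen
  | cons e μ =>
    obtain ⟨he, htail⟩ := isPathFrom_cons.1 hμ
    exact hN e he μ w htail (Nat.le_of_succ_le_succ hlen)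

theorem Cofinal.mem_absorbed (hG : G.Cofinal) (hne : H.Nonempty) (hH : G.Hereditary H) (v : G.V) :
    v ∈ absorbed H :=
  Set.eq_univ_iff_forall.1
    (hG _ (hne.mono hH.subset_absorbed) (hereditary_absorbed H) (saturated_absorbed H)) v

theorem Cofinal.NW_subset (hG : G.Cofinal) (hne : H.Nonempty) (hH : G.Hereditary H) :
    G.NW ⊆ H := by
  intro v hv
  obtain ⟨N, hN⟩ := hG.mem_absorbed hne hH v
  obtain ⟨μ, hμ, hlen⟩ := exists_loop_le_length_of_mem_NW hv N
  exact hN μ v hμ hlen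

theorem Cofinal.NW_subset_descendants (hG : G.Cofinal) (v : G.V) : G.NW ⊆ descendants v :=
  hG.NW_subset ⟨v, self_mem_descendants v⟩ (hereditary_descendants v)

theorem Cofinal.hereditary_NW (hG : G.Cofinal) : G.Hereditary G.NW := by
  intro e he
  obtain ⟨μ, hμ⟩ := hG.NW_subset_descendants (G.r e) he
  exact ⟨μ ++ [e], by simp, hμ.append (isPathFrom_singleton e)⟩

end DirGraph

/-- the set of non-wandering vertices of a cofinal graph. -/
theorem stmt_2 (G : DirGraph) (hG : G.Cofinal) (hNW : G.NW.Nonempty) :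
    G.Hereditary G.NW ∧
    (∀ v ∈ G.NW, ∀ w ∈ G.NW,
      ∃ μ : List G.E, G.IsPathFrom μ v w ∧ ∀ e ∈ μ, G.s e ∈ G.NW) ∧
    (∀ v : G.V, ∃ N : ℕ, ∀ (μ : List G.E) (w : G.V),
      G.IsPathFrom μ v w → N ≤ μ.length → w ∈ G.NW) := by
  have hereditary_NW := hG.hereditary_NW
  refine ⟨hereditary_NW, fun v hv w hw => ?_, fun v => ?_⟩
  · obtain ⟨μ, hμ⟩ := hG.NW_subset_descendants v hw
    exact ⟨μ, hμ, hereditary_NW.source_mem hμ hv⟩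
  · exact hG.mem_absorbed hNW hereditary_NW v
end

section
/- Let G be a cofinal countable directed graph, F : E → ℝ a function and β ∈ ℝ. Let ψ ∈ [0,∞)^V be an A(β)-harmonic vector which is not identically zero. Then ψ_v > 0 for every vertex v ∈ V, and all powers of A(β) are finite, i.e. A(β)ⁿ_{uw} < ∞ for all n ∈ ℕ and all u, w ∈ V. -/
open scoped ENNReal NNReal Classical
open Filter MeasureTheory

/-!
The zero set of a superharmonic vector is hereditary, because the entry of `A(β)` along an edge is
positive; it is saturated as soon as the vector is harmonic at the vertices outside `V∞`. In a
cofinal graph a vector of this kind that is not identically zero therefore vanishes nowhere. The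
inequality `A(β) ψ ≤ ψ` iterates to `A(β)ⁿ ψ ≤ ψ`, so that `A(β)ⁿ_{uw} ψ_w ≤ ψ_u < ∞`, which bounds
the entry because `ψ_w > 0`.
-/

namespace DirGraph

variable {G : DirGraph} {F : G.E → ℝ} {β : ℝ} {φ : G.V → ℝ≥0∞}

/-- `φ` is an `A(β)`-superharmonic (or excessive) vector: `A(β) φ ≤ φ`. Infinite entries are
allowed. -/
def Superharmonic (G : DirGraph) (F : G.E → ℝ) (β : ℝ) (φ : G.V → ℝ≥0∞) : Prop :=
  ∀ v : G.V, ∑' w : G.V, G.Amat F β v w * φ w ≤ φ v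

/-- `φ` is an almost `A(β)`-harmonic vector: it is superharmonic, and harmonic at every vertex
outside `V∞`. This is the weakening of harmonicity that is compatible with sinks, where an
`A(β)`-harmonic vector has to vanish. -/
structure AlmostHarmonic (G : DirGraph) (F : G.E → ℝ) (β : ℝ) (φ : G.V → ℝ≥0∞) : Prop where
  superharmonic : G.Superharmonic F β φ
  tsum_eq (v : G.V) (hsink : ¬ G.IsSink v) (hinf : ¬ G.InfEmitter v) :
    ∑' w : G.V, G.Amat F β v w * φ w = φ v

theorem Harmonic.almostHarmonic {ψ : G.V → ℝ≥0} (hψ : G.Harmonic F β ψ) :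
    G.AlmostHarmonic F β (fun v => ψ v) where
  superharmonic v := (hψ v).le
  tsum_eq v _ _ := hψ v

theorem amat_ne_zero_iff {u w : G.V} :
    G.Amat F β u w ≠ 0 ↔ ∃ e : G.E, G.s e = u ∧ G.r e = w := by
  simp [Amat, ENNReal.tsum_eq_zero, Real.exp_pos]

theorem Superharmonic.hereditary_setOf_eq_zero (hφ : G.Superharmonic F β φ) :
    G.Hereditary {v | φ v = 0} := by
  intro e (he : φ (G.s e) = 0)
  have hsum : ∑' w : G.V, G.Amat F β (G.s e) w * φ w = 0 := le_zero_iff.mp (he ▸ hφ (G.s e))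
  have hterm : G.Amat F β (G.s e) (G.r e) * φ (G.r e) = 0 := ENNReal.tsum_eq_zero.mp hsum (G.r e)
  exact (mul_eq_zero.mp hterm).resolve_left (amat_ne_zero_iff.mpr ⟨e, rfl, rfl⟩)

theorem AlmostHarmonic.saturated_setOf_eq_zero (hφ : G.AlmostHarmonic F β φ) :
    G.Saturated {v | φ v = 0} := by
  intro v hsink hinf hsucc
  change φ v = 0
  rw [← hφ.tsum_eq v hsink hinf, ENNReal.tsum_eq_zero]
  intro w
  by_cases hvw : G.Amat F β v w = 0
  · rw [hvw, zero_mul]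
  · obtain ⟨e, hs, rfl⟩ := amat_ne_zero_iff.mp hvw
    exact mul_eq_zero_of_right _ (hsucc e hs)

theorem AlmostHarmonic.pos_of_cofinal (hφ : G.AlmostHarmonic F β φ) (hG : G.Cofinal)
    (hne : φ ≠ 0) (v : G.V) : 0 < φ v := by
  by_contra! hv
  have huniv : {v | φ v = 0} = Set.univ :=
    hG _ ⟨v, le_zero_iff.mp hv⟩ hφ.superharmonic.hereditary_setOf_eq_zero
      hφ.saturated_setOf_eq_zero
  exact hne (funext (Set.eq_univ_iff_forall.mp huniv))

theorem Superharmonic.tsum_apow_mul_le (hφ : G.Superharmonic F β φ) (n : ℕ) (u : G.V) :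
    ∑' w : G.V, G.Apow F β n u w * φ w ≤ φ u := by
  induction n generalizing u with
  | zero => simp [Apow]
  | succ n ih =>
    calc ∑' w : G.V, G.Apow F β (n + 1) u w * φ w
        = ∑' (w : G.V) (x : G.V), G.Amat F β u x * (G.Apow F β n x w * φ w) := by
          simp only [Apow, ← ENNReal.tsum_mul_right, mul_assoc]
      _ = ∑' x : G.V, G.Amat F β u x * ∑' w : G.V, G.Apow F β n x w * φ w := by
          rw [ENNReal.tsum_comm]
          simp only [ENNReal.tsum_mul_left]
      _ ≤ ∑' x : G.V, G.Amat F β u x * φ x := by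
          gcongr with x
          exact ih x
      _ ≤ φ u := hφ u

theorem Superharmonic.apow_ne_top (hφ : G.Superharmonic F β φ) (n : ℕ) {u w : G.V}
    (hu : φ u ≠ ⊤) (hw : φ w ≠ 0) : G.Apow F β n u w ≠ ⊤ := by
  have hle : G.Apow F β n u w * φ w ≤ φ u := (ENNReal.le_tsum w).trans (hφ.tsum_apow_mul_le n u)
  intro htop
  rw [htop, ENNReal.top_mul hw] at hle
  exact hu (top_le_iff.mp hle)

end DirGraph

theorem stmt_4_general (G : DirGraph) (hG : G.Cofinal) (F : G.E → ℝ) (β : ℝ)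
    (ψ : G.V → ℝ≥0) (hψ : G.AlmostHarmonic F β (fun v => ψ v)) (hne : ψ ≠ 0) :
    (∀ v : G.V, 0 < ψ v) ∧ ∀ (n : ℕ) (u w : G.V), G.Apow F β n u w ≠ ⊤ := by
  have hne' : (fun v => (ψ v : ℝ≥0∞)) ≠ 0 := fun h =>
    hne (funext fun v => ENNReal.coe_eq_zero.mp (congrFun h v))
  have hpos : ∀ v : G.V, 0 < (ψ v : ℝ≥0∞) := hψ.pos_of_cofinal hG hne'
  exact ⟨fun v => ENNReal.coe_pos.mp (hpos v), fun n _ w =>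
    hψ.superharmonic.apow_ne_top n ENNReal.coe_ne_top (hpos w).ne'⟩

/-- a nonzero harmonic vector on a cofinal graph is strictly positive,
and all powers of `A(β)` are finite. -/
theorem stmt_4 (G : DirGraph) (hG : G.Cofinal) (F : G.E → ℝ) (β : ℝ)
    (ψ : G.V → ℝ≥0) (hψ : G.Harmonic F β ψ) (hne : ψ ≠ 0) :
    (∀ v : G.V, 0 < ψ v) ∧ ∀ (n : ℕ) (u w : G.V), G.Apow F β n u w ≠ ⊤ :=
  stmt_4_general G hG F β ψ hψ.almostHarmonic hne
end

section
/- Let G be a cofinal countable directed graph, F : E → ℝ a function and β ∈ ℝ. Then: (1) every sink v ∈ V∞ is β-summable; (2) an infinite emitter v ∈ V∞ is β-summable if and only if Σ_{n≥0} A(β)ⁿ_{vv} < ∞, and this condition implies that all powers of A(β) are finite, i.e. A(β)ⁿ_{uw} < ∞ for all n ∈ ℕ and all u, w ∈ V. -/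
open scoped ENNReal NNReal Classical
open Filter MeasureTheory

/-!
Write `g(w, v) = ∑ₙ A(β)ⁿ_{wv}` for the Green function; splitting off the first edge of a path gives
`g(w, v) = δ_{wv} + ∑_{s(e) = w} e^{-βF(e)} g(r(e), v)`. By this identity the set of `w` with
`g(w, v) < ∞` is hereditary and saturated, so in a cofinal graph it is everything as soon as it
contains `v`. For a sink `v` the sum in `g(v, v)` is empty, so `g(v, v) = 1`.

A saturated set need not absorb a vertex of `V∞`, so for `v ∈ V∞` the vertices from which `v` is
unreachable also form a hereditary saturated set. It misses `v`, hence is empty by cofinality. With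
`A(β)ᵏ_{wv} > 0` for some `k`, the bound `A(β)ⁿ_{uw} A(β)ᵏ_{wv} ≤ A(β)ⁿ⁺ᵏ_{uv} ≤ g(u, v) < ∞` makes
`A(β)ⁿ_{uw}` finite.
-/

namespace DirGraph

variable {G : DirGraph} {F : G.E → ℝ} {β : ℝ} {u v w : G.V}

/-- The weight `e^{-βF(e)}` of an edge, as an element of `[0,∞]`. -/
noncomputable def weight (F : G.E → ℝ) (β : ℝ) (e : G.E) : ℝ≥0∞ :=
  ENNReal.ofReal (Real.exp (-β * F e))

/-- The Green function `∑ₙ A(β)ⁿ_{wv}`: the total weight of all finite paths from `w` to `v`. -/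
noncomputable def green (F : G.E → ℝ) (β : ℝ) (w v : G.V) : ℝ≥0∞ :=
  ∑' n : ℕ, G.Apow F β n w v

/-- `v` is `β`-summable: the Green function is finite at `(w, v)` for every `w`. The paper uses the
term for `v ∈ V∞` only; here it makes sense at every vertex. -/
def BetaSummable (F : G.E → ℝ) (β : ℝ) (v : G.V) : Prop :=
  ∀ w : G.V, green F β w v ≠ ⊤

/-- There is a finite path, possibly of length zero, from `w` to `v`; encoded as the
reflexive-transitive closure of the edge relation. -/
def Reaches (w v : G.V) : Prop :=
  Relation.ReflTransGen (fun x y => ∃ e : G.E, G.s e = x ∧ G.r e = y) w v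

theorem weight_ne_zero (e : G.E) : weight F β e ≠ 0 :=
  (ENNReal.ofReal_pos.mpr (Real.exp_pos _)).ne'

theorem weight_ne_top (e : G.E) : weight F β e ≠ ⊤ :=
  ENNReal.ofReal_ne_top

theorem tsum_Amat_mul (f : G.V → ℝ≥0∞) (u : G.V) :
    ∑' x, G.Amat F β u x * f x = ∑' e : {e : G.E // G.s e = u}, weight F β e * f (G.r e) := by
  let edgesByRange : (Σ x, {e : G.E // G.s e = u ∧ G.r e = x}) ≃ {e : G.E // G.s e = u} :=
    { toFun := fun p => ⟨p.2, p.2.2.1⟩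
      invFun := fun e => ⟨G.r e, e, e.2, rfl⟩
      left_inv := by rintro ⟨_, _, _, rfl⟩; rfl
      right_inv := fun _ => rfl }
  rw [← edgesByRange.tsum_eq, ENNReal.tsum_sigma']
  refine tsum_congr fun x => ?_
  rw [Amat, ← ENNReal.tsum_mul_right]
  exact tsum_congr fun e => congrArg (weight F β e * f ·) e.2.2.symm

theorem Apow_add (m n : ℕ) (u v : G.V) :
    G.Apow F β (m + n) u v = ∑' x, G.Apow F β m u x * G.Apow F β n x v := by
  induction m generalizing u with
  | zero =>
    rw [Nat.zero_add, tsum_eq_single u fun x hx => by simp [Apow, hx.symm]]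
    simp [Apow]
  | succ m ih =>
    simp only [Nat.succ_add, Apow, ih, ← ENNReal.tsum_mul_left, ← ENNReal.tsum_mul_right, mul_assoc]
    exact ENNReal.tsum_comm

theorem Apow_mul_Apow_le (m n : ℕ) (u w v : G.V) :
    G.Apow F β m u w * G.Apow F β n w v ≤ G.Apow F β (m + n) u v := by
  rw [Apow_add]
  exact ENNReal.le_tsum w

theorem Apow_le_green (n : ℕ) (w v : G.V) : G.Apow F β n w v ≤ green F β w v :=
  ENNReal.le_tsum n

theorem Reaches.exists_Apow_ne_zero (h : Reaches w v) : ∃ n, G.Apow F β n w v ≠ 0 := by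
  induction h using Relation.ReflTransGen.head_induction_on with
  | refl => exact ⟨0, by simp [Apow]⟩
  | head step _ ih =>
    obtain ⟨e, rfl, rfl⟩ := step
    obtain ⟨n, hn⟩ := ih
    refine ⟨n + 1, fun h => ?_⟩
    rw [Apow, tsum_Amat_mul, ENNReal.tsum_eq_zero] at h
    exact mul_ne_zero (weight_ne_zero e) hn (h ⟨e, rfl⟩)

theorem Reaches.Apow_ne_top (hwv : Reaches w v) (huv : green F β u v ≠ ⊤) (n : ℕ) :
    G.Apow F β n u w ≠ ⊤ := by
  obtain ⟨k, hk⟩ := hwv.exists_Apow_ne_zero (F := F) (β := β)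
  have hprod : G.Apow F β n u w * G.Apow F β k w v ≠ ⊤ :=
    ne_top_of_le_ne_top huv ((Apow_mul_Apow_le n k u w v).trans (Apow_le_green (n + k) u v))
  exact fun h => hprod (by rw [h, ENNReal.top_mul hk])

theorem green_eq_add_tsum (w v : G.V) :
    green F β w v = (if w = v then 1 else 0) +
      ∑' e : {e : G.E // G.s e = w}, weight F β e * green F β (G.r e) v := by
  rw [green, tsum_eq_zero_add' ENNReal.summable, ← tsum_Amat_mul (green F β · v)]
  simp only [Apow, green, ← ENNReal.tsum_mul_left]
  rw [ENNReal.tsum_comm]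

theorem weight_mul_green_le (e : G.E) (v : G.V) :
    weight F β e * green F β (G.r e) v ≤ green F β (G.s e) v := by
  rw [green_eq_add_tsum (G.s e) v]
  exact (ENNReal.le_tsum (⟨e, rfl⟩ : {e' // G.s e' = G.s e})).trans le_add_self

theorem IsSink.green_self (hv : G.IsSink v) : green F β v v = 1 := by
  have : IsEmpty {e : G.E // G.s e = v} := ⟨fun e => hv e e.2⟩
  rw [green_eq_add_tsum, if_pos rfl, tsum_empty, add_zero]

theorem hereditary_green_ne_top (v : G.V) : G.Hereditary {w | green F β w v ≠ ⊤} := by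
  intro e hs hr
  have hle := weight_mul_green_le (F := F) (β := β) e v
  rw [hr, ENNReal.mul_top (weight_ne_zero e)] at hle
  exact hs (top_le_iff.mp hle)

theorem saturated_green_ne_top (v : G.V) : G.Saturated {w | green F β w v ≠ ⊤} := by
  intro u _ hfin hsucc
  have : Fintype {e : G.E // G.s e = u} := (Set.not_infinite.mp hfin).fintype
  rw [Set.mem_ofPred_eq, green_eq_add_tsum, tsum_fintype]
  have hdelta : (if u = v then 1 else 0 : ℝ≥0∞) ≠ ⊤ := by split_ifs <;> simp
  exact ENNReal.add_ne_top.mpr ⟨hdelta, ENNReal.sum_ne_top.mpr fun e _ =>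
    ENNReal.mul_ne_top (weight_ne_top e.1) (hsucc e e.2)⟩

theorem Cofinal.betaSummable_iff (hG : G.Cofinal) :
    BetaSummable F β v ↔ green F β v v ≠ ⊤ :=
  ⟨fun h => h v, fun h => Set.eq_univ_iff_forall.mp <|
    hG {w | green F β w v ≠ ⊤} ⟨v, h⟩ (hereditary_green_ne_top v) (saturated_green_ne_top v)⟩

theorem hereditary_not_reaches (v : G.V) : G.Hereditary {w | ¬ Reaches w v} :=
  fun e hs hr => hs (hr.head ⟨e, rfl, rfl⟩)

theorem saturated_not_reaches (hv : G.IsSink v ∨ G.InfEmitter v) :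
    G.Saturated {w | ¬ Reaches w v} := by
  intro u hsink hinf hsucc huv
  rcases huv.cases_head with rfl | ⟨_, ⟨e, he, rfl⟩, hreach⟩
  · exact hv.elim hsink hinf
  · exact hsucc e he hreach

theorem Cofinal.reaches (hG : G.Cofinal) (hv : G.IsSink v ∨ G.InfEmitter v) (w : G.V) :
    Reaches w v := by
  by_contra hw
  have huniv := hG {w | ¬ Reaches w v} ⟨w, hw⟩ (hereditary_not_reaches v) (saturated_not_reaches hv)
  exact Set.eq_univ_iff_forall.mp huniv v .refl

end DirGraph

open DirGraph in
theorem stmt_5_general (G : DirGraph) (hG : G.Cofinal) (F : G.E → ℝ) (β : ℝ) (v : G.V) :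
    (G.IsSink v → BetaSummable F β v) ∧
    (BetaSummable F β v ↔ green F β v v ≠ ⊤) ∧
    (G.IsSink v ∨ G.InfEmitter v → green F β v v ≠ ⊤ →
      ∀ (n : ℕ) (u w : G.V), G.Apow F β n u w ≠ ⊤) := by
  refine ⟨fun hsink => ?_, hG.betaSummable_iff, fun hv hgreen n u w => ?_⟩
  · exact hG.betaSummable_iff.mpr (hsink.green_self.trans_ne ENNReal.one_ne_top)
  · exact (hG.reaches hv w).Apow_ne_top (hG.betaSummable_iff.mpr hgreen u) n

/-- β-summability of sinks and infinite emitters in a cofinal graph. -/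
theorem stmt_5 (G : DirGraph) (hG : G.Cofinal) (F : G.E → ℝ) (β : ℝ) :
    (∀ v : G.V, G.IsSink v → ∀ w : G.V, ∑' n : ℕ, G.Apow F β n w v ≠ ⊤) ∧
    (∀ v : G.V, G.InfEmitter v →
      (((∀ w : G.V, ∑' n : ℕ, G.Apow F β n w v ≠ ⊤) ↔ ∑' n : ℕ, G.Apow F β n v v ≠ ⊤) ∧
        ((∑' n : ℕ, G.Apow F β n v v ≠ ⊤) → ∀ (n : ℕ) (u w : G.V), G.Apow F β n u w ≠ ⊤))) :=
  ⟨fun v => (stmt_5_general G hG F β v).1,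
    fun v hv => have ⟨_, hiff, hpow⟩ := stmt_5_general G hG F β v; ⟨hiff, hpow (.inr hv)⟩⟩
end

section
/- Let G be a strongly connected countable directed graph with finitely many vertices, F : E → ℝ a function and β ∈ ℝ. If A(β) is transient, then the only A(β)-harmonic vector ψ ∈ [0,∞)^V is the zero vector. -/
open scoped ENNReal NNReal Classical
open Filter MeasureTheory

/-!
Green's function of a nonnegative matrix is dominated by its diagonal, relative to a superharmonic
vector `ψ`: `(∑ₙ Aⁿ)_{uw} ψ_w ≤ ψ_u (∑ₙ Aⁿ)_{ww}`. For partial sums this is an induction on `N`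
along `∑_{n ≤ N} Aⁿ = 1 + A ∑_{n < N} Aⁿ`. If `ψ` is harmonic and the index set is finite, summing
`Aⁿ ψ = ψ` over `n` gives `∑ₙ ψ_u = ∑_w (∑ₙ Aⁿ)_{uw} ψ_w ≤ ψ_u ∑_w (∑ₙ Aⁿ)_{ww}`. The right side is
finite when `A` is transient, while on the left a constant is summed infinitely often; so `ψ_u = 0`.
-/

open scoped Matrix

section MatrixPowers

open Matrix

variable {ι R : Type*} [Fintype ι] [DecidableEq ι]

theorem pow_mulVec_eq_of_mulVec_eq [Semiring R] {A : Matrix ι ι R} {ψ : ι → R}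
    (hψ : A *ᵥ ψ = ψ) (n : ℕ) : A ^ n *ᵥ ψ = ψ := by
  induction n with
  | zero => rw [pow_zero, one_mulVec]
  | succ n ih => rw [pow_succ, ← mulVec_mulVec, hψ, ih]

theorem geom_sum_apply_mul_le_of_mulVec_le [CommSemiring R] [PartialOrder R] [IsOrderedRing R]
    [CanonicallyOrderedAdd R] {A : Matrix ι ι R} {ψ : ι → R} (hψ : A *ᵥ ψ ≤ ψ) (N : ℕ) (u w : ι) :
    (∑ n ∈ Finset.range N, A ^ n) u w * ψ w ≤ ψ u * (∑ n ∈ Finset.range N, A ^ n) w w := by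
  induction N generalizing u with
  | zero => simp
  | succ N ih =>
    obtain rfl | huw := eq_or_ne u w
    · rw [mul_comm]
    set S := ∑ n ∈ Finset.range N, A ^ n with hS
    calc (∑ n ∈ Finset.range (N + 1), A ^ n) u w * ψ w
        = ∑ x, A u x * (S x w * ψ w) := by
          rw [geom_sum_succ, ← hS, Matrix.add_apply, one_apply_ne huw, add_zero, mul_apply,
            Finset.sum_mul]
          simp only [mul_assoc]
      _ ≤ ∑ x, A u x * (ψ x * S w w) := by gcongr ∑ x, A u x * ?_ with x; exact ih x
      _ = (A *ᵥ ψ) u * S w w := by simp only [mulVec, dotProduct, Finset.sum_mul, mul_assoc]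
      _ ≤ ψ u * S w w := by gcongr; exact hψ u
      _ ≤ ψ u * (∑ n ∈ Finset.range (N + 1), A ^ n) w w := by
          rw [Finset.sum_range_succ, Matrix.add_apply]
          gcongr
          exact le_self_add

theorem tsum_pow_apply_mul_le_of_mulVec_le {A : Matrix ι ι ℝ≥0∞} {ψ : ι → ℝ≥0∞}
    (hψ : A *ᵥ ψ ≤ ψ) (u w : ι) :
    (∑' n, (A ^ n) u w) * ψ w ≤ ψ u * ∑' n, (A ^ n) w w := by
  rw [← ENNReal.tsum_mul_right]
  refine ENNReal.tsum_le_of_sum_range_le fun N => ?_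
  calc ∑ n ∈ Finset.range N, (A ^ n) u w * ψ w
      = (∑ n ∈ Finset.range N, A ^ n) u w * ψ w := by rw [Matrix.sum_apply, Finset.sum_mul]
    _ ≤ ψ u * ∑ n ∈ Finset.range N, (A ^ n) w w := by
        rw [← Matrix.sum_apply]
        exact geom_sum_apply_mul_le_of_mulVec_le hψ N u w
    _ ≤ ψ u * ∑' n, (A ^ n) w w := by gcongr; exact ENNReal.sum_le_tsum _

theorem eq_zero_of_mulVec_eq_of_tsum_pow_ne_top {A : Matrix ι ι ℝ≥0∞}
    (hA : ∀ i, ∑' n, (A ^ n) i i ≠ ⊤) {ψ : ι → ℝ≥0∞} (hψ : A *ᵥ ψ = ψ)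
    (hψ_top : ∀ i, ψ i ≠ ⊤) : ψ = 0 := by
  funext u
  by_contra hu
  have sum_eq : ∑' _ : ℕ, ψ u = ∑ w, (∑' n, (A ^ n) u w) * ψ w :=
    calc ∑' _ : ℕ, ψ u = ∑' n, (A ^ n *ᵥ ψ) u := by simp only [pow_mulVec_eq_of_mulVec_eq hψ]
      _ = ∑ w, ∑' n, (A ^ n) u w * ψ w := Summable.tsum_finsetSum fun _ _ => ENNReal.summable
      _ = ∑ w, (∑' n, (A ^ n) u w) * ψ w := by simp only [ENNReal.tsum_mul_right]
  have sum_ne_top : ∑ w, (∑' n, (A ^ n) u w) * ψ w ≠ ⊤ :=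
    ENNReal.sum_ne_top.2 fun w _ => ne_top_of_le_ne_top (ENNReal.mul_ne_top (hψ_top u) (hA w))
      (tsum_pow_apply_mul_le_of_mulVec_le hψ.le u w)
  exact sum_ne_top (sum_eq ▸ ENNReal.tsum_const_eq_top_of_ne_zero hu)

end MatrixPowers

namespace DirGraph

variable {G : DirGraph} [Fintype G.V] {F : G.E → ℝ} {β : ℝ}

theorem Apow_eq_pow (n : ℕ) : G.Apow F β n = Matrix.of (G.Amat F β) ^ n := by
  induction n with
  | zero => ext u w; rw [pow_zero, Matrix.one_apply, Apow]
  | succ n ih => ext u w; rw [pow_succ', Matrix.mul_apply, Apow, tsum_fintype, ih]; rfl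

theorem Harmonic.mulVec_eq {ψ : G.V → ℝ≥0} (hψ : G.Harmonic F β ψ) :
    Matrix.of (G.Amat F β) *ᵥ (fun v => (ψ v : ℝ≥0∞)) = fun v => (ψ v : ℝ≥0∞) :=
  funext fun v => (tsum_fintype _).symm.trans (hψ v)

theorem Transient.tsum_pow_ne_top (hT : G.Transient F β) (v : G.V) :
    ∑' n, (Matrix.of (G.Amat F β) ^ n) v v ≠ ⊤ := by
  simpa only [Apow_eq_pow] using hT v

end DirGraph

theorem stmt_7_general (G : DirGraph) (hfin : Finite G.V) (F : G.E → ℝ) (β : ℝ)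
    (hT : G.Transient F β) (ψ : G.V → ℝ≥0) (hψ : G.Harmonic F β ψ) : ψ = 0 := by
  have := Fintype.ofFinite G.V
  have ψ_eq_zero : (fun v => (ψ v : ℝ≥0∞)) = 0 :=
    eq_zero_of_mulVec_eq_of_tsum_pow_ne_top hT.tsum_pow_ne_top hψ.mulVec_eq
      fun _ => ENNReal.coe_ne_top
  exact funext fun v => ENNReal.coe_eq_zero.1 (congrFun ψ_eq_zero v)

/-- on a finite strongly connected graph with `A(β)` transient there are
no nonzero harmonic vectors. -/
theorem stmt_7 (G : DirGraph) (hSC : G.StronglyConnected) (hfin : Finite G.V)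
    (F : G.E → ℝ) (β : ℝ) (hT : G.Transient F β)
    (ψ : G.V → ℝ≥0) (hψ : G.Harmonic F β ψ) : ψ = 0 :=
  stmt_7_general G hfin F β hT ψ hψ
end
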